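/- arXiv:2001.11308 — 4 statements merged into one kernel-verified Lean document; each statement's English description precedes it below -/
import Mathlib

section
/- In the uncontrolled setting with an irreducible stochastic matrix P, assume: (a) the domain D has nonempty interior, and (b) the copositivity condition holds: for every 1 ≤ i ≤ d and every nonzero x ∈ ℝ^{d−1} with nonnegative entries, xᵀ Q^{(i,i)} x > 0. Then there exist a function H : ℝ^d → ℝ^{d×d} and constants η > 0, L ≥ 0 such that: (1) |H(y')| ≤ L for all y' ∈ ℝ^d; (2) H is continuous on D; (3) for every y' ∈ ℝ^d and every unit vector v in the outward normal cone C(𝔓(y')) of D at the Euclidean projection 𝔓(y') of y' onto D, one has vᵀ H(y') v ≥ η; (4) for every y ∈ D and every v ∈ C(y), the vector H(y)v belongs to the reflection cone C_o(y) := { −∑_{i=1}^d α_i e_i : α_i ≥ 0 and α_i = 0 whenever y_i > ∑_j P_{i,j} y_j − c̄_i }. -/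
open Matrix

/-!
Write `Q = 1 - P`. Passing from `x` to `|x|` can only decrease `x ⬝ᵥ Q *ᵥ x`, because the
off-diagonal entries of `Q` are nonpositive; hence copositivity on the face `x i = 0` of the orthant
is positive definiteness on the whole hyperplane `x i = 0`.

Since `Q *ᵥ 1 = 0`, the domain is invariant under translation along `1`, so outward normals are
orthogonal to `1`. Such a vector `v` is `a ᵥ* Q` for a unique `a` with `a i = 0`, namely
`a = v ᵥ* B⁻¹` where `B` is `Q` with row `i` replaced by the basis vector at `i`. Therefore
`v ⬝ᵥ a = a ⬝ᵥ Q *ᵥ a > 0`. If `v` is an outward normal at a point where the `i`-th constraint is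
slack, then `-a` is the vector of Lagrange multipliers, so `a` lies in the reflection cone.

By the minimum principle for `Q`, every point of the space has at least one positive slack. So the
operators `v ↦ v ᵥ* B⁻¹` can be averaged with the normalized positive parts of the slacks as
weights: on the domain, an index with an active constraint gets weight `0`. The weights are
continuous, and compactness of the simplex and of the unit sphere turns strict positivity into a
bound that is uniform over all points and all unit vectors orthogonal to `1`.
-/

namespace ObliqueReflection

variable {ι κ : Type*} [Fintype ι]

section CoordinateHyperplanes

variable {R : Type*}

/-- The quadratic form of `Q` is positive definite on each coordinate hyperplane `x i = 0`, i.e.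
each matrix `Q^{(i,i)}` is positive definite (without symmetry). -/
def PosDefOnCoordHyperplanes [NonUnitalNonAssocSemiring R] [LT R]
    (Q : Matrix ι ι R) : Prop :=
  ∀ ⦃i : ι⦄ ⦃x : ι → R⦄, x i = 0 → x ≠ 0 → 0 < x ⬝ᵥ Q *ᵥ x

lemma dotProduct_mulVec_eq_submatrix_succAbove [NonUnitalNonAssocSemiring R] {m : ℕ}
    (M : Matrix (Fin (m + 1)) (Fin (m + 1)) R) {i : Fin (m + 1)} {x : Fin (m + 1) → R}
    (hi : x i = 0) :
    x ⬝ᵥ M *ᵥ x =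
      (x ∘ i.succAbove) ⬝ᵥ M.submatrix i.succAbove i.succAbove *ᵥ (x ∘ i.succAbove) := by
  simp [dotProduct, mulVec, Fin.sum_univ_succAbove _ i, hi]

variable [CommRing R] [LinearOrder R] [IsStrictOrderedRing R]

lemma abs_dotProduct_mulVec_abs_le {Q : Matrix ι ι R} (hoff : Pairwise fun i j => Q i j ≤ 0)
    (x : ι → R) : |x| ⬝ᵥ Q *ᵥ |x| ≤ x ⬝ᵥ Q *ᵥ x := by
  simp only [dot_mulVec_eq_sum_sum, Pi.abs_apply]
  refine Finset.sum_le_sum fun j _ => Finset.sum_le_sum fun i _ => ?_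
  rcases eq_or_ne i j with rfl | hij
  · exact le_of_eq (by linear_combination Q i i * abs_mul_abs_self (x i))
  · calc |x i| * Q i j * |x j| = Q i j * |x i * x j| := by rw [abs_mul]; ring
      _ ≤ Q i j * (x i * x j) := mul_le_mul_of_nonpos_left (le_abs_self _) (hoff hij)
      _ = x i * Q i j * x j := by ring

lemma posDefOnCoordHyperplanes_of_copositive {m : ℕ} {Q : Matrix (Fin (m + 1)) (Fin (m + 1)) R}
    (hoff : Pairwise fun i j => Q i j ≤ 0)
    (hcopos : ∀ (i : Fin (m + 1)) (x : Fin m → R), (∀ k, 0 ≤ x k) → x ≠ 0 →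
      0 < x ⬝ᵥ Q.submatrix i.succAbove i.succAbove *ᵥ x) :
    PosDefOnCoordHyperplanes Q := by
  intro i x hi hx
  have habs : |x| ∘ i.succAbove ≠ 0 := by
    contrapose! hx
    funext j
    rcases Fin.eq_self_or_eq_succAbove i j with rfl | ⟨k, rfl⟩
    · exact hi
    · exact abs_eq_zero.1 (congrFun hx k)
  calc 0 < (|x| ∘ i.succAbove) ⬝ᵥ
        Q.submatrix i.succAbove i.succAbove *ᵥ (|x| ∘ i.succAbove) :=
        hcopos i _ (fun _ => abs_nonneg _) habs
    _ = |x| ⬝ᵥ Q *ᵥ |x| := (dotProduct_mulVec_eq_submatrix_succAbove Q (by simp [hi])).symm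
    _ ≤ x ⬝ᵥ Q *ᵥ x := abs_dotProduct_mulVec_abs_le hoff x

lemma PosDefOnCoordHyperplanes.diag_pos [Nontrivial ι] {Q : Matrix ι ι R}
    (hpos : PosDefOnCoordHyperplanes Q) (i : ι) : 0 < Q i i := by
  classical
  obtain ⟨j, hj⟩ := exists_ne i
  simpa using hpos (i := j) (x := Pi.single i 1) (by simp [hj]) (by simp)

end CoordinateHyperplanes

section PinnedRow

lemma vecMul_updateRow_of_apply_eq_zero {R : Type*} [NonUnitalNonAssocSemiring R] [DecidableEq ι]
    (M : Matrix ι κ R) {i : ι} (r : κ → R) {a : ι → R} (hi : a i = 0) :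
    a ᵥ* M.updateRow i r = a ᵥ* M := by
  funext j
  refine Finset.sum_congr rfl fun l _ => ?_
  rcases eq_or_ne l i with rfl | hl
  · simp [hi]
  · exact congrArg (a l * ·) (congrFun (updateRow_ne hl) j)

/-- `Q` with row `i` replaced by the basis vector at `i`. Solving with this invertible matrix
instead of the singular `Q` selects the solution whose `i`-th coordinate vanishes. -/
def pinRow {R : Type*} [Zero R] [One R] [DecidableEq ι] (Q : Matrix ι ι R) (i : ι) :
    Matrix ι ι R :=
  Q.updateRow i (Pi.single i 1)

section Semiring

variable {R : Type*} [NonAssocSemiring R] [DecidableEq ι]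

lemma pinRow_mulVec (Q : Matrix ι ι R) (i : ι) (x : ι → R) :
    pinRow Q i *ᵥ x = Function.update (Q *ᵥ x) i (x i) := by
  rw [pinRow, updateRow_mulVec, single_one_dotProduct]

lemma pinRow_mulVec_one {Q : Matrix ι ι R} (hone : Q *ᵥ 1 = 0) (i : ι) :
    pinRow Q i *ᵥ 1 = Pi.single i 1 := by
  rw [pinRow_mulVec, hone]
  rfl

end Semiring

variable {𝕜 : Type*} [Field 𝕜] [Preorder 𝕜] [DecidableEq ι] {Q : Matrix ι ι 𝕜} {v : ι → 𝕜}

lemma isUnit_pinRow (hone : Q *ᵥ 1 = 0) (hpos : PosDefOnCoordHyperplanes Q) (i : ι) :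
    IsUnit (pinRow Q i) := by
  rw [← vecMul_injective_iff_isUnit, ← coe_vecMulLinear, injective_iff_map_eq_zero]
  intro a ha
  rw [vecMulLinear_apply] at ha
  have hai : a i = 0 := by
    simpa [dotProduct_mulVec, ha] using (congrArg (a ⬝ᵥ ·) (pinRow_mulVec_one hone i)).symm
  have haQ : a ᵥ* Q = 0 := by rw [← vecMul_updateRow_of_apply_eq_zero Q _ hai, ← pinRow, ha]
  by_contra hne
  exact (hpos hai hne).ne' (by rw [dotProduct_mulVec, haQ, zero_dotProduct])

lemma vecMul_inv_pinRow_apply_self (hone : Q *ᵥ 1 = 0) (hpos : PosDefOnCoordHyperplanes Q) (i : ι)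
    (hv : v ⬝ᵥ 1 = 0) : (v ᵥ* (pinRow Q i)⁻¹) i = 0 := by
  have hdet := (isUnit_iff_isUnit_det _).1 (isUnit_pinRow hone hpos i)
  calc (v ᵥ* (pinRow Q i)⁻¹) i = v ⬝ᵥ (pinRow Q i)⁻¹ *ᵥ Pi.single i 1 := by
        rw [dotProduct_mulVec, dotProduct_single_one]
    _ = v ⬝ᵥ 1 := by
        rw [← pinRow_mulVec_one hone, mulVec_mulVec, nonsing_inv_mul _ hdet, one_mulVec]
    _ = 0 := hv

lemma vecMul_inv_pinRow_vecMul (hone : Q *ᵥ 1 = 0) (hpos : PosDefOnCoordHyperplanes Q) (i : ι)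
    (hv : v ⬝ᵥ 1 = 0) : (v ᵥ* (pinRow Q i)⁻¹) ᵥ* Q = v := by
  have hdet := (isUnit_iff_isUnit_det _).1 (isUnit_pinRow hone hpos i)
  rw [← vecMul_updateRow_of_apply_eq_zero Q (Pi.single i 1)
    (vecMul_inv_pinRow_apply_self hone hpos i hv), ← pinRow, vecMul_vecMul,
    nonsing_inv_mul _ hdet, vecMul_one]

lemma dotProduct_vecMul_inv_pinRow_pos (hone : Q *ᵥ 1 = 0) (hpos : PosDefOnCoordHyperplanes Q)
    (i : ι) (hv : v ⬝ᵥ 1 = 0) (hne : v ≠ 0) : 0 < v ⬝ᵥ (v ᵥ* (pinRow Q i)⁻¹) := by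
  set a := v ᵥ* (pinRow Q i)⁻¹
  have haQ : a ᵥ* Q = v := vecMul_inv_pinRow_vecMul hone hpos i hv
  have ha : a ≠ 0 := by
    intro ha
    rw [ha, zero_vecMul] at haQ
    exact hne haQ.symm
  calc 0 < a ⬝ᵥ Q *ᵥ a := hpos (vecMul_inv_pinRow_apply_self hone hpos i hv) ha
    _ = v ⬝ᵥ a := by rw [dotProduct_mulVec, haQ]

end PinnedRow

section Polyhedron

/-- The slacks of the constraints `0 ≤ Q *ᵥ x + c` at `x`. -/
def slack (Q : Matrix κ ι ℝ) (c : κ → ℝ) (x : ι → ℝ) : κ → ℝ :=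
  Q *ᵥ x + c

/-- The polyhedron `{x | 0 ≤ Q *ᵥ x + c}`, the domain `D` of the reflected process. -/
def polyhedron (Q : Matrix κ ι ℝ) (c : κ → ℝ) : Set (ι → ℝ) :=
  {x | ∀ i, 0 ≤ slack Q c x i}

/-- The outward normal cone `C(y)` of `D` at `y`. -/
def outwardNormalCone (D : Set (ι → ℝ)) (y : ι → ℝ) : Set (ι → ℝ) :=
  {v | ∀ z ∈ D, v ⬝ᵥ (z - y) ≤ 0}

variable {Q : Matrix κ ι ℝ} {c : κ → ℝ} {x y u v : ι → ℝ}

lemma continuous_slack (Q : Matrix κ ι ℝ) (c : κ → ℝ) : Continuous (slack Q c) := by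
  unfold slack
  fun_prop

lemma slack_add_smul (Q : Matrix κ ι ℝ) (c : κ → ℝ) (x u : ι → ℝ) (t : ℝ) :
    slack Q c (x + t • u) = slack Q c x + t • Q *ᵥ u := by
  simp only [slack, mulVec_add, mulVec_smul]
  abel

lemma slack_pos_of_mem_interior (hx : x ∈ interior (polyhedron Q c)) {i : κ} (hi : Q i ≠ 0) :
    0 < slack Q c x i := by
  have hline : Filter.Tendsto (fun t : ℝ => x + t • (-Q i)) (nhdsWithin 0 (Set.Ioi 0)) (nhds x) :=
    (Continuous.tendsto' (by fun_prop) 0 x (by simp)).mono_left nhdsWithin_le_nhds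
  obtain ⟨t, htD, ht⟩ := ((hline.eventually (mem_interior_iff_mem_nhds.1 hx)).and
    self_mem_nhdsWithin).exists
  have hQi : 0 < Q i ⬝ᵥ Q i :=
    (Finset.sum_nonneg fun j _ => mul_self_nonneg (Q i j)).lt_of_ne'
      (mt dotProduct_self_eq_zero.1 hi)
  have hslack := htD i
  rw [slack_add_smul, mulVec_neg] at hslack
  have hdecrease : t * (Q i ⬝ᵥ Q i) ≤ slack Q c x i := by
    simpa [mulVec] using hslack
  exact (mul_pos ht hQi).trans_le hdecrease

lemma exists_pos_add_smul_mem_polyhedron [Finite κ] (hy : y ∈ polyhedron Q c)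
    (hu : ∀ l, slack Q c y l = 0 → 0 ≤ (Q *ᵥ u) l) :
    ∃ t : ℝ, 0 < t ∧ y + t • u ∈ polyhedron Q c := by
  have hsmall : ∀ᶠ t : ℝ in nhdsWithin 0 (Set.Ioi 0), ∀ l, 0 ≤ slack Q c (y + t • u) l := by
    simp only [Filter.eventually_all, slack_add_smul, Pi.add_apply, Pi.smul_apply, smul_eq_mul]
    intro l
    rcases (hy l).eq_or_lt with hactive | hinactive
    · filter_upwards [self_mem_nhdsWithin] with t ht
      rw [← hactive, zero_add]
      exact mul_nonneg (le_of_lt ht) (hu l hactive.symm)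
    · have hcont : Continuous fun t : ℝ => slack Q c y l + t * (Q *ᵥ u) l := by fun_prop
      filter_upwards [nhdsWithin_le_nhds (hcont.continuousAt.eventually
        (lt_mem_nhds (by simpa using hinactive)))] with t ht using ht.le
  obtain ⟨t, htD, ht⟩ := (hsmall.and self_mem_nhdsWithin).exists
  exact ⟨t, ht, htD⟩

lemma dotProduct_nonpos_of_mem_outwardNormalCone [Finite κ] (hy : y ∈ polyhedron Q c)
    (hv : v ∈ outwardNormalCone (polyhedron Q c) y)
    (hu : ∀ l, slack Q c y l = 0 → 0 ≤ (Q *ᵥ u) l) : v ⬝ᵥ u ≤ 0 := by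
  obtain ⟨t, ht, htD⟩ := exists_pos_add_smul_mem_polyhedron hy hu
  have hmul : t * (v ⬝ᵥ u) ≤ 0 := by simpa using hv _ htD
  exact nonpos_of_mul_nonpos_right hmul ht

lemma dotProduct_eq_zero_of_mem_outwardNormalCone [Finite κ] (hy : y ∈ polyhedron Q c)
    (hv : v ∈ outwardNormalCone (polyhedron Q c) y)
    (hu : ∀ l, slack Q c y l = 0 → (Q *ᵥ u) l = 0) : v ⬝ᵥ u = 0 := by
  refine le_antisymm
    (dotProduct_nonpos_of_mem_outwardNormalCone hy hv fun l hl => (hu l hl).ge) ?_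
  have hneg := dotProduct_nonpos_of_mem_outwardNormalCone (u := -u) hy hv fun l hl => by
    simp [mulVec_neg, hu l hl]
  simpa using hneg

end Polyhedron

section MinimumPrinciple

lemma mulVec_apply_nonpos_of_forall_le {R : Type*} [CommRing R] [PartialOrder R] [IsOrderedRing R]
    {Q : Matrix ι ι R} (hoff : Pairwise fun i j => Q i j ≤ 0) (hone : Q *ᵥ 1 = 0) {x : ι → R}
    {i : ι} (hi : ∀ j, x i ≤ x j) : (Q *ᵥ x) i ≤ 0 := by
  have hshift : Q *ᵥ x = Q *ᵥ (x - x i • 1) := by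
    rw [mulVec_sub, mulVec_smul, hone, smul_zero, sub_zero]
  rw [hshift]
  refine Finset.sum_nonpos fun j _ => ?_
  rcases eq_or_ne i j with rfl | hij
  · simp
  · exact mul_nonpos_of_nonpos_of_nonneg (hoff hij) (by simpa using hi j)

/-- If no slack were positive at `y`, then `Q` would map the difference of an interior point and `y`
to a positive vector, contradicting the minimum principle. -/
lemma exists_slack_pos [Nonempty ι] {Q : Matrix ι ι ℝ} {c : ι → ℝ}
    (hoff : Pairwise fun i j => Q i j ≤ 0) (hone : Q *ᵥ 1 = 0) (hrow : ∀ i, Q i ≠ 0)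
    (hint : (interior (polyhedron Q c)).Nonempty) (y : ι → ℝ) :
    ∃ i, 0 < slack Q c y i := by
  by_contra! hle
  obtain ⟨x, hx⟩ := hint
  obtain ⟨i, hi⟩ := Finite.exists_min (x - y)
  have hmin : (Q *ᵥ (x - y)) i ≤ 0 := mulVec_apply_nonpos_of_forall_le hoff hone hi
  have hdiff : slack Q c x i = slack Q c y i + (Q *ᵥ (x - y)) i := by
    simp only [slack, mulVec_sub, Pi.add_apply, Pi.sub_apply]
    ring
  linarith [slack_pos_of_mem_interior hx (hrow i), hle i]

end MinimumPrinciple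

section SlackWeight

variable [Fintype κ] {Q : Matrix κ ι ℝ} {c : κ → ℝ} {y : ι → ℝ}

/-- The positive parts of the slacks, normalized to total mass `1`. This is a point of the simplex
only if some slack is positive; otherwise it is `0`. -/
noncomputable def slackWeight (Q : Matrix κ ι ℝ) (c : κ → ℝ) (y : ι → ℝ) : κ → ℝ :=
  (∑ i, (slack Q c y i)⁺)⁻¹ • fun i => (slack Q c y i)⁺

lemma slack_pos_of_slackWeight_ne_zero {i : κ} (hi : slackWeight Q c y i ≠ 0) :
    0 < slack Q c y i :=
  posPart_pos_iff.1 ((posPart_nonneg _).lt_of_ne' (right_ne_zero_of_mul hi))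

lemma sum_posPart_slack_pos (hex : ∃ i, 0 < slack Q c y i) : 0 < ∑ i, (slack Q c y i)⁺ :=
  Finset.sum_pos' (fun _ _ => posPart_nonneg _)
    (hex.imp fun i hi => ⟨Finset.mem_univ i, posPart_pos_iff.2 hi⟩)

lemma slackWeight_mem_stdSimplex (hex : ∃ i, 0 < slack Q c y i) :
    slackWeight Q c y ∈ stdSimplex ℝ κ := by
  have hsum := sum_posPart_slack_pos hex
  refine ⟨fun i => mul_nonneg (inv_nonneg.2 hsum.le) (posPart_nonneg _), ?_⟩
  simp only [slackWeight, Pi.smul_apply, smul_eq_mul, ← Finset.mul_sum]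
  exact inv_mul_cancel₀ hsum.ne'

lemma continuous_slackWeight (hex : ∀ y, ∃ i, 0 < slack Q c y i) :
    Continuous (slackWeight Q c) := by
  have hcont : Continuous fun y i => (slack Q c y i)⁺ :=
    continuous_pi fun i =>
      continuous_posPart.comp ((continuous_apply i).comp (continuous_slack Q c))
  have hsum : Continuous fun y => ∑ i, (slack Q c y i)⁺ :=
    continuous_finsetSum _ fun i _ => (continuous_apply i).comp hcont
  exact (hsum.inv₀ fun y => (sum_posPart_slack_pos (hex y)).ne').smul hcont

end SlackWeight

section Reflection

variable {Q : Matrix ι ι ℝ} {c : ι → ℝ} {y v w : ι → ℝ}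

/-- The reflection cone `C_o(y)`, described by the signs and zeros of the coordinates. -/
def reflectionCone (Q : Matrix ι ι ℝ) (c y : ι → ℝ) : Set (ι → ℝ) :=
  {u | ∀ k, u k ≤ 0 ∧ (0 < slack Q c y k → u k = 0)}

lemma sum_smul_mem_reflectionCone {α : Type*} (s : Finset α) {r : α → ℝ} {u : α → ι → ℝ}
    (hr : ∀ a ∈ s, 0 ≤ r a) (hu : ∀ a ∈ s, r a ≠ 0 → u a ∈ reflectionCone Q c y) :
    ∑ a ∈ s, r a • u a ∈ reflectionCone Q c y := by
  intro k
  simp only [Finset.sum_apply, Pi.smul_apply, smul_eq_mul]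
  refine ⟨Finset.sum_nonpos fun a ha => ?_, fun hk => Finset.sum_eq_zero fun a ha => ?_⟩
  · by_cases hra : r a = 0
    · simp [hra]
    · exact mul_nonpos_of_nonneg_of_nonpos (hr a ha) (hu a ha hra k).1
  · by_cases hra : r a = 0
    · simp [hra]
    · simp [(hu a ha hra k).2 hk]

lemma isCompact_setOf_sum_sq_eq_one : IsCompact {v : ι → ℝ | ∑ i, v i ^ 2 = 1} := by
  convert (isCompact_sphere (0 : EuclideanSpace ℝ ι) 1).image (PiLp.continuous_ofLp 2 _)
  ext v
  constructor
  · intro hv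
    refine ⟨WithLp.toLp 2 v, ?_, rfl⟩
    rw [mem_sphere_zero_iff_norm, ← sq_eq_sq₀ (norm_nonneg _) zero_le_one,
      EuclideanSpace.real_norm_sq_eq, one_pow]
    exact hv
  · rintro ⟨x, hx, rfl⟩
    rw [Set.mem_ofPred_eq, ← EuclideanSpace.real_norm_sq_eq, mem_sphere_zero_iff_norm.1 hx, one_pow]

variable [DecidableEq ι]

lemma vecMul_inv_pinRow_mem_reflectionCone {i : ι} (hunit : IsUnit (pinRow Q i))
    (hy : y ∈ polyhedron Q c) (hi : 0 < slack Q c y i)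
    (hv : v ∈ outwardNormalCone (polyhedron Q c) y) :
    v ᵥ* (pinRow Q i)⁻¹ ∈ reflectionCone Q c y := by
  intro k
  set u := (pinRow Q i)⁻¹ *ᵥ Pi.single k 1 with hu
  have hentry : (v ᵥ* (pinRow Q i)⁻¹) k = v ⬝ᵥ u := by
    rw [hu, dotProduct_mulVec, dotProduct_single_one]
  have hQu : ∀ l, slack Q c y l = 0 → (Q *ᵥ u) l = (Pi.single k 1 : ι → ℝ) l := by
    intro l hl
    have hli : l ≠ i := by
      rintro rfl
      exact hi.ne' hl
    have hpin : pinRow Q i *ᵥ u = Pi.single k 1 := by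
      rw [hu, mulVec_mulVec, mul_nonsing_inv _ ((isUnit_iff_isUnit_det _).1 hunit), one_mulVec]
    rw [← hpin, pinRow_mulVec, Function.update_of_ne hli]
  rw [hentry]
  refine ⟨dotProduct_nonpos_of_mem_outwardNormalCone hy hv fun l hl => ?_, fun hk =>
    dotProduct_eq_zero_of_mem_outwardNormalCone hy hv fun l hl => ?_⟩
  · rw [hQu l hl]
    exact (Pi.single_nonneg.2 zero_le_one : (0 : ι → ℝ) ≤ Pi.single k 1) l
  · rw [hQu l hl, Pi.single_eq_of_ne]
    rintro rfl
    exact hk.ne' hl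

/-- The average, with weights `w`, of the operators `v ↦ v ᵥ* (pinRow Q i)⁻¹`. -/
noncomputable def averagedReflection (Q : Matrix ι ι ℝ) (w : ι → ℝ) : Matrix ι ι ℝ :=
  ∑ i, w i • ((pinRow Q i)⁻¹)ᵀ

lemma averagedReflection_mulVec (Q : Matrix ι ι ℝ) (w v : ι → ℝ) :
    averagedReflection Q w *ᵥ v = ∑ i, w i • (v ᵥ* (pinRow Q i)⁻¹) := by
  simp only [averagedReflection, sum_mulVec, smul_mulVec, mulVec_transpose]

lemma continuous_averagedReflection (Q : Matrix ι ι ℝ) : Continuous (averagedReflection Q) := by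
  unfold averagedReflection
  fun_prop

lemma exists_forall_abs_averagedReflection_le (Q : Matrix ι ι ℝ) :
    ∃ L : ℝ, 0 ≤ L ∧ ∀ w ∈ stdSimplex ℝ ι, ∀ k j, |averagedReflection Q w k j| ≤ L := by
  have hcont : Continuous fun w : ι → ℝ => fun k j => averagedReflection Q w k j :=
    continuous_averagedReflection Q
  obtain ⟨L, hL⟩ := (isCompact_stdSimplex ℝ ι).exists_bound_of_continuousOn hcont.continuousOn
  refine ⟨max L 0, le_max_right _ _, fun w hw k j => ?_⟩
  calc |averagedReflection Q w k j|
      ≤ ‖fun j => averagedReflection Q w k j‖ :=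
        norm_le_pi_norm (fun j => averagedReflection Q w k j) j
    _ ≤ ‖fun k j => averagedReflection Q w k j‖ :=
        norm_le_pi_norm (fun k j => averagedReflection Q w k j) k
    _ ≤ max L 0 := (hL w hw).trans (le_max_left _ _)

lemma dotProduct_averagedReflection_mulVec_pos (hone : Q *ᵥ 1 = 0)
    (hpos : PosDefOnCoordHyperplanes Q) (hw : w ∈ stdSimplex ℝ ι) (hv : v ⬝ᵥ 1 = 0)
    (hne : v ≠ 0) : 0 < v ⬝ᵥ averagedReflection Q w *ᵥ v := by
  have hterm := fun i => dotProduct_vecMul_inv_pinRow_pos hone hpos i hv hne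
  obtain ⟨i, -, hi⟩ := Finset.exists_ne_zero_of_sum_ne_zero (hw.2.trans_ne one_ne_zero)
  simp only [averagedReflection_mulVec, dotProduct_sum, dotProduct_smul, smul_eq_mul]
  exact Finset.sum_pos' (fun j _ => mul_nonneg (hw.1 j) (hterm j).le)
    ⟨i, Finset.mem_univ i, mul_pos ((hw.1 i).lt_of_ne' hi) (hterm i)⟩

lemma exists_pos_forall_le_dotProduct_averagedReflection_mulVec (hone : Q *ᵥ 1 = 0)
    (hpos : PosDefOnCoordHyperplanes Q) :
    ∃ η : ℝ, 0 < η ∧ ∀ w ∈ stdSimplex ℝ ι, ∀ v : ι → ℝ, v ⬝ᵥ 1 = 0 → ∑ i, v i ^ 2 = 1 →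
      η ≤ v ⬝ᵥ averagedReflection Q w *ᵥ v := by
  have hhyperplane : IsClosed {v : ι → ℝ | v ⬝ᵥ 1 = 0} :=
    isClosed_eq (by fun_prop) continuous_const
  have hcompact := (isCompact_stdSimplex ℝ ι).prod
    (isCompact_setOf_sum_sq_eq_one.inter_right hhyperplane)
  have hcont : Continuous fun z : (ι → ℝ) × (ι → ℝ) => z.2 ⬝ᵥ averagedReflection Q z.1 *ᵥ z.2 := by
    have := continuous_averagedReflection Q
    fun_prop
  obtain ⟨η, hη, hle⟩ := hcompact.exists_forall_le' hcont.continuousOn (a := 0) <| by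
    rintro ⟨w, v⟩ ⟨hw, hunit, hv⟩
    refine dotProduct_averagedReflection_mulVec_pos hone hpos hw hv ?_
    rintro rfl
    simp at hunit
  exact ⟨η, hη, fun w hw v hv hunit => hle (w, v) ⟨hw, hunit, hv⟩⟩

/-- The oblique reflection operator `H`. -/
noncomputable def obliqueReflection (Q : Matrix ι ι ℝ) (c y : ι → ℝ) : Matrix ι ι ℝ :=
  averagedReflection Q (slackWeight Q c y)

lemma continuous_obliqueReflection (hex : ∀ y, ∃ i, 0 < slack Q c y i) :
    Continuous (obliqueReflection Q c) :=
  (continuous_averagedReflection Q).comp (continuous_slackWeight hex)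

lemma obliqueReflection_mulVec_mem_reflectionCone (hunit : ∀ i, IsUnit (pinRow Q i))
    (hex : ∃ i, 0 < slack Q c y i) (hy : y ∈ polyhedron Q c)
    (hv : v ∈ outwardNormalCone (polyhedron Q c) y) :
    obliqueReflection Q c y *ᵥ v ∈ reflectionCone Q c y := by
  rw [obliqueReflection, averagedReflection_mulVec]
  exact sum_smul_mem_reflectionCone _ (fun i _ => (slackWeight_mem_stdSimplex hex).1 i)
    fun i _ hi => vecMul_inv_pinRow_mem_reflectionCone (hunit i) hy
      (slack_pos_of_slackWeight_ne_zero hi) hv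

end Reflection

section Markov

lemma pairwise_one_sub_apply_nonpos {ι R : Type*} [DecidableEq ι] [AddCommGroupWithOne R]
    [PartialOrder R] [IsOrderedAddMonoid R] {P : Matrix ι ι R} (hP : ∀ i j, 0 ≤ P i j) :
    Pairwise fun i j => (1 - P) i j ≤ 0 := by
  intro i j hij
  simpa [one_apply_ne hij] using hP i j

lemma one_sub_mulVec_one {R : Type*} [NonAssocRing R] [DecidableEq ι] {P : Matrix ι ι R}
    (hP : ∀ i, ∑ j, P i j = 1) : (1 - P) *ᵥ 1 = 0 := by
  rw [sub_mulVec, one_mulVec, sub_eq_zero]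
  funext i
  simp [mulVec, dotProduct, hP]

variable [DecidableEq ι]

lemma slack_one_sub (P : Matrix ι ι ℝ) (c y : ι → ℝ) (i : ι) :
    slack (1 - P) c y i = y i - ((∑ j, P i j * y j) - c i) := by
  simp only [slack, sub_mulVec, one_mulVec, Pi.add_apply, Pi.sub_apply, mulVec, dotProduct]
  ring

lemma polyhedron_one_sub (P : Matrix ι ι ℝ) (c : ι → ℝ) :
    polyhedron (1 - P) c = {x | ∀ i, (∑ j, P i j * x j) - c i ≤ x i} := by
  simp only [polyhedron, slack_one_sub, sub_nonneg]

lemma exists_eq_neg_of_mem_reflectionCone_one_sub {P : Matrix ι ι ℝ} {c y u : ι → ℝ}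
    (hu : u ∈ reflectionCone (1 - P) c y) :
    ∃ α : ι → ℝ, (∀ i, 0 ≤ α i) ∧ (∀ i, (∑ j, P i j * y j) - c i < y i → α i = 0) ∧ u = -α := by
  refine ⟨-u, fun i => neg_nonneg.2 (hu i).1, fun i hi => neg_eq_zero.2 ((hu i).2 ?_),
    (neg_neg u).symm⟩
  rwa [slack_one_sub, sub_pos]

end Markov

end ObliqueReflection

open ObliqueReflection

theorem existence_of_oblique_reflection_operator_markovian_general
    {ι : Type*} [Fintype ι] [Nontrivial ι] {Q : Matrix ι ι ℝ} {c : ι → ℝ}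
    (hoff : Pairwise fun i j => Q i j ≤ 0) (hone : Q *ᵥ 1 = 0)
    (hpos : PosDefOnCoordHyperplanes Q) (hint : (interior (polyhedron Q c)).Nonempty) :
    ∃ (H : (ι → ℝ) → Matrix ι ι ℝ) (η L : ℝ), 0 < η ∧ 0 ≤ L ∧
      (∀ y i j, |H y i j| ≤ L) ∧
      Continuous H ∧
      (∀ y v, v ⬝ᵥ 1 = 0 → ∑ i, v i ^ 2 = 1 → η ≤ v ⬝ᵥ H y *ᵥ v) ∧
      ∀ y ∈ polyhedron Q c, ∀ v ∈ outwardNormalCone (polyhedron Q c) y,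
        H y *ᵥ v ∈ reflectionCone Q c y := by
  classical
  have hrow : ∀ i, Q i ≠ 0 := fun i hi => (hpos.diag_pos i).ne' (congrFun hi i)
  have hex : ∀ y, ∃ i, 0 < slack Q c y i := exists_slack_pos hoff hone hrow hint
  have hweight : ∀ y, slackWeight Q c y ∈ stdSimplex ℝ ι :=
    fun y => slackWeight_mem_stdSimplex (hex y)
  obtain ⟨L, hL, hbound⟩ := exists_forall_abs_averagedReflection_le Q
  obtain ⟨η, hη, hell⟩ := exists_pos_forall_le_dotProduct_averagedReflection_mulVec hone hpos
  exact ⟨obliqueReflection Q c, η, L, hη, hL, fun y => hbound _ (hweight y),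
    continuous_obliqueReflection hex, fun y => hell _ (hweight y), fun y hy v hv =>
      obliqueReflection_mulVec_mem_reflectionCone (isUnit_pinRow hone hpos) (hex y) hy hv⟩

/-- Uncontrolled setting with an irreducible stochastic matrix `P`
(`d = n + 2`), cost vector `c̄` and domain `D` with nonempty interior; assume the
copositivity condition: `xᵀ Q^{(i,i)} x > 0` for every `i` and every nonzero
nonnegative `x ∈ ℝ^{d−1}`.  Then there exist `H : ℝ^d → ℝ^{d×d}` and constants
`η > 0`, `L ≥ 0` such that:
(1) `|H(y')| ≤ L` (entrywise) for all `y'`;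
(2) `H` is continuous on `D`;
(3) for every `y'` and every unit vector `v` in the outward normal cone of `D` at the
Euclidean projection `p` of `y'` onto `D`, one has `vᵀ H(y') v ≥ η`;
(4) for every `y ∈ D` and every `v` in the normal cone at `y`, the vector `H(y) v`
belongs to the reflection cone
`C_o(y) = {−∑ αᵢ eᵢ : αᵢ ≥ 0, αᵢ = 0 whenever y_i > ∑_j P i j y j − c̄ i}`. -/
theorem existence_of_oblique_reflection_operator_markovian
    (n : ℕ)
    (P : Matrix (Fin (n + 2)) (Fin (n + 2)) ℝ)
    (c : Fin (n + 2) → ℝ)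
    (hP0 : ∀ i j, 0 ≤ P i j)
    (hP1 : ∀ i, ∑ j, P i j = 1)
    (hirr : ∀ i j, ∃ k : ℕ, 1 ≤ k ∧ 0 < (P ^ k) i j)
    (D : Set (Fin (n + 2) → ℝ))
    (hD : D = {x | ∀ i, (∑ j, P i j * x j) - c i ≤ x i})
    (hint : (interior D).Nonempty)
    (hcopos : ∀ (i : Fin (n + 2)) (x : Fin (n + 1) → ℝ),
      (∀ k, 0 ≤ x k) → x ≠ 0 →
        0 < x ⬝ᵥ (((1 - P).submatrix i.succAbove i.succAbove) *ᵥ x)) :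
    ∃ (H : (Fin (n + 2) → ℝ) → Matrix (Fin (n + 2)) (Fin (n + 2)) ℝ) (η L : ℝ),
      0 < η ∧ 0 ≤ L ∧
      (∀ y' i j, |H y' i j| ≤ L) ∧
      (∀ i j, ContinuousOn (fun y => H y i j) D) ∧
      (∀ y' p : Fin (n + 2) → ℝ, p ∈ D →
        (∀ w ∈ D, (∑ i, (y' i - p i) ^ 2) ≤ ∑ i, (y' i - w i) ^ 2) →
        ∀ v : Fin (n + 2) → ℝ, (∑ i, (v i) ^ 2) = 1 →
          (∀ z ∈ D, (∑ i, v i * (z i - p i)) ≤ 0) →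
          η ≤ v ⬝ᵥ (H y' *ᵥ v)) ∧
      (∀ y ∈ D, ∀ v : Fin (n + 2) → ℝ,
        (∀ z ∈ D, (∑ i, v i * (z i - y i)) ≤ 0) →
        ∃ α : Fin (n + 2) → ℝ, (∀ i, 0 ≤ α i) ∧
          (∀ i, (∑ j, P i j * y j) - c i < y i → α i = 0) ∧
          H y *ᵥ v = -α) := by
  rw [← polyhedron_one_sub] at hD
  subst hD
  have hoff := pairwise_one_sub_apply_nonpos hP0
  have hone := one_sub_mulVec_one hP1
  obtain ⟨H, η, L, hη, hL, hbound, hcont, hell, hcone⟩ :=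
    existence_of_oblique_reflection_operator_markovian_general hoff hone
      (posDefOnCoordHyperplanes_of_copositive hoff hcopos) hint
  refine ⟨H, η, L, hη, hL, hbound, fun i j => (hcont.matrix_elem i j).continuousOn,
    fun y p hp _ v hunit hv => hell y v ?_ hunit, fun y hy v hv =>
      exists_eq_neg_of_mem_reflectionCone_one_sub (hcone y hy v hv)⟩
  exact dotProduct_eq_zero_of_mem_outwardNormalCone hp hv fun i _ => congrFun hone i
end

section
/- Consider the 3-dimensional switching problem with controlled randomisation where 𝒞 = [0,1], P^u is the stochastic matrix with rows (0, u, 1−u), (1−u, 0, u), (u, 1−u, 0), and c̄^u_i = 1 − u(1−u) for i = 1,2,3. Let D := {y ∈ ℝ³ : y_i ≥ max_{u∈[0,1]}(∑_{j=1}^3 P^u_{i,j} y_j − (1 − u(1−u))) for i = 1,2,3}, which has nonempty interior. Then there exist a function H : ℝ³ → ℝ^{3×3} and constants η > 0, L ≥ 0 such that: (1) |H(y')| ≤ L for all y' ∈ ℝ³; (2) H is continuous on D; (3) for every y' ∈ ℝ³ and every unit vector v in the outward normal cone C(𝔓(y')) of D at the Euclidean projection 𝔓(y') of y' onto D, one has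 vᵀ H(y') v ≥ η; (4) for every y ∈ D and every v ∈ C(y), the vector H(y)v belongs to the reflection cone C_o(y) := { −∑_{i=1}^3 α_i e_i : α_i ≥ 0 and α_i = 0 whenever y_i > max_{u∈[0,1]}(∑_j P^u_{i,j} y_j − c̄^u_i) }. -/
open Matrix

/-!
The domain `D` is invariant under translation by `(1, 1, 1)`, and its boundary consists of three
parabolic arcs (times that direction), one per mode `i` and parametrised by the control `u` that
is optimal there; the arcs of consecutive modes meet at corners. At the boundary point of mode `i`
and control `u`, a normal vector `v` has coordinate sum zero, `v i ≤ 0`, and pairs to a number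
`κ = τ ⬝ᵥ v` with the tangent `τ = (0, 1 - u, -u)` such that `(s - u) κ ≤ 0` for all `s ∈ [0, 1]`.

The matrix field used is `H = eᵢ eᵢᵀ + τ τᵀ` along the arcs. There `H v = v i • eᵢ + κ • τ`, whose
coordinates `v i`, `(1 - u) κ`, `-u κ` are nonpositive, the last two being nonzero only at the
corners, where the corresponding mode is active as well. Moreover `vᵀ H v = (v i)² + κ²`, which
controls `|v|² / 3` on vectors with coordinate sum zero. In the interior of `D` the normal cone is
trivial, so only continuity and boundedness matter there; off `D` the identity matrix serves.
-/

section OutwardNormalCone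

variable {ι : Type*} [Fintype ι] {D : Set (ι → ℝ)} {y v : ι → ℝ}

/-- The outward normal cone `C(y)` of a set `D ⊆ ℝ^ι` at `y`. The pairing is the dot product, since
`ι → ℝ` carries no inner product. -/
def outwardNormalCone (D : Set (ι → ℝ)) (y : ι → ℝ) : Set (ι → ℝ) :=
  {v | ∀ z ∈ D, v ⬝ᵥ (z - y) ≤ 0}

lemma dotProduct_eq_zero_of_mem_outwardNormalCone {w : ι → ℝ} (hv : v ∈ outwardNormalCone D y)
    (hadd : y + w ∈ D) (hsub : y - w ∈ D) : v ⬝ᵥ w = 0 := by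
  have hle : v ⬝ᵥ w ≤ 0 := by simpa using hv _ hadd
  have hge : 0 ≤ v ⬝ᵥ w := by simpa using hv _ hsub
  exact le_antisymm hle hge

lemma eq_zero_of_mem_outwardNormalCone_of_mem_interior (hv : v ∈ outwardNormalCone D y)
    (hy : y ∈ interior D) : v = 0 := by
  have hlim : Filter.Tendsto (fun t : ℝ => y + t • v) (nhdsWithin 0 (Set.Ioi 0)) (nhds y) := by
    have hcont : Continuous fun t : ℝ => y + t • v := by fun_prop
    simpa using (hcont.tendsto 0).mono_left nhdsWithin_le_nhds
  obtain ⟨t, htD, ht⟩ :=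
    ((hlim.eventually (mem_interior_iff_mem_nhds.1 hy)).and self_mem_nhdsWithin).exists
  have hvv : t * (v ⬝ᵥ v) ≤ 0 := by simpa using hv _ htD
  exact dotProduct_self_eq_zero.1 <|
    le_antisymm (nonpos_of_mul_nonpos_right hvv ht) (dotProduct_self_star_nonneg v)

lemma sub_mul_dotProduct_deriv_nonpos {γ : ℝ → ι → ℝ} {γ' : ι → ℝ} {S : Set ℝ} {s u : ℝ}
    (hS : Convex ℝ S) (hγ : Set.MapsTo γ S D) (hγ' : HasDerivAt γ γ' u) (hu : u ∈ S) (hs : s ∈ S)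
    (hv : v ∈ outwardNormalCone D (γ u)) : (s - u) * (v ⬝ᵥ γ') ≤ 0 := by
  have hmax : IsMaxOn (fun r => v ⬝ᵥ γ r) S u := fun r hr => by
    simpa [dotProduct_sub] using hv _ (hγ hr)
  have hderiv : HasDerivAt (fun r => v ⬝ᵥ γ r) (v ⬝ᵥ γ') u :=
    HasDerivAt.fun_sum fun j _ => (hasDerivAt_pi.1 hγ' j).const_mul (v j)
  simpa using hmax.localize.hasFDerivWithinAt_nonpos hderiv.hasFDerivAt.hasFDerivWithinAt
    (sub_mem_posTangentConeAt_of_segment_subset (hS.segment_subset hu hs))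

end OutwardNormalCone

lemma eq_of_sum_sub_sq_le {ι : Type*} [Fintype ι] {y p : ι → ℝ}
    (h : ∑ i, (y i - p i) ^ 2 ≤ ∑ i, (y i - y i) ^ 2) : p = y := by
  have hsum : ∑ i, (y i - p i) ^ 2 = 0 :=
    le_antisymm (by simpa using h) (Finset.sum_nonneg fun i _ => sq_nonneg _)
  ext i
  have hi := (Finset.sum_eq_zero_iff_of_nonneg fun i _ => sq_nonneg _).1 hsum i (Finset.mem_univ i)
  exact (sub_eq_zero.1 (pow_eq_zero_iff two_ne_zero |>.1 hi)).symm

section Cyclic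

lemma sum_fin_three_cyclic {M : Type*} [AddCommMonoid M] (i : Fin 3) (f : Fin 3 → M) :
    ∑ j, f j = f i + f (i + 1) + f (i + 2) := by
  rw [← Equiv.sum_comp (Equiv.addLeft i) f, Fin.sum_univ_three]
  simp

lemma forall_fin_three_cyclic (i : Fin 3) {p : Fin 3 → Prop} :
    (∀ j, p j) ↔ p i ∧ p (i + 1) ∧ p (i + 2) := by
  rw [← (Equiv.addLeft i).forall_congr_right, Fin.forall_fin_succ, Fin.forall_fin_two]
  simp

lemma fin_three_add_one_add_one (i : Fin 3) : i + 1 + 1 = i + 2 := by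
  rw [add_assoc]; rfl

lemma fin_three_add_one_add_two (i : Fin 3) : i + 1 + 2 = i := by
  rw [add_assoc]; exact add_zero i

lemma fin_three_add_two_add_one (i : Fin 3) : i + 2 + 1 = i := by
  rw [add_assoc]; exact add_zero i

lemma fin_three_add_two_add_two (i : Fin 3) : i + 2 + 2 = i + 1 := by
  rw [add_assoc]; rfl

lemma eq_of_isSymm_fin_three {α : Type*} {M N : Matrix (Fin 3) (Fin 3) α} (hM : M.IsSymm)
    (hN : N.IsSymm) (hdiag : ∀ i, M i i = N i i)
    (hoff : ∀ i, M (i + 1) (i + 2) = N (i + 1) (i + 2)) : M = N := by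
  ext i j
  revert j
  refine (forall_fin_three_cyclic i).2 ⟨hdiag i, ?_, ?_⟩
  · have h := hoff (i + 2)
    rwa [fin_three_add_two_add_one, fin_three_add_two_add_two] at h
  · have h := hoff (i + 1)
    rwa [fin_three_add_one_add_one, fin_three_add_one_add_two, hM.apply, hN.apply] at h

end Cyclic

section Domain

variable {y v : Fin 3 → ℝ}

/-- The value `(P^u y)ᵢ - c̄^u_i` of switching away from mode `i` with control `u`, the modes being
numbered cyclically. -/
def switchingGain (y : Fin 3 → ℝ) (i : Fin 3) (u : ℝ) : ℝ :=
  u * y (i + 1) + (1 - u) * y (i + 2) - (1 - u * (1 - u))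

/-- The domain `D` of the switching problem. -/
def switchingDomain : Set (Fin 3 → ℝ) :=
  {y | ∀ i, ∀ u ∈ Set.Icc (0 : ℝ) 1, switchingGain y i u ≤ y i}

/-- The maximiser of the quadratic `switchingGain y i` over all of `ℝ`; it lies in `[0, 1]` when
`y` belongs to the domain. -/
noncomputable def optimalControl (y : Fin 3 → ℝ) (i : Fin 3) : ℝ :=
  (1 + y (i + 1) - y (i + 2)) / 2

/-- The maximum of `switchingGain y i` over all of `ℝ`. -/
noncomputable def optimalGain (y : Fin 3 → ℝ) (i : Fin 3) : ℝ :=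
  switchingGain y i (optimalControl y i)

lemma switchingGain_eq_optimalGain_sub_sq (y : Fin 3 → ℝ) (i : Fin 3) (u : ℝ) :
    switchingGain y i u = optimalGain y i - (u - optimalControl y i) ^ 2 := by
  unfold optimalGain switchingGain optimalControl
  ring

lemma switchingGain_le_optimalGain (y : Fin 3 → ℝ) (i : Fin 3) (u : ℝ) :
    switchingGain y i u ≤ optimalGain y i := by
  rw [switchingGain_eq_optimalGain_sub_sq]
  exact sub_le_self _ (sq_nonneg _)

lemma le_add_one_of_mem_switchingDomain (hy : y ∈ switchingDomain) (i j : Fin 3) :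
    y j ≤ y i + 1 := by
  have h0 : y (i + 2) - 1 ≤ y i := by simpa [switchingGain] using hy i 0 (by simp)
  have h1 : y (i + 1) - 1 ≤ y i := by simpa [switchingGain] using hy i 1 (by simp)
  revert j
  rw [forall_fin_three_cyclic i]
  refine ⟨?_, ?_, ?_⟩ <;> linarith

lemma optimalControl_mem_Icc (hy : y ∈ switchingDomain) (i : Fin 3) :
    optimalControl y i ∈ Set.Icc (0 : ℝ) 1 := by
  have h1 := le_add_one_of_mem_switchingDomain hy (i + 1) (i + 2)
  have h2 := le_add_one_of_mem_switchingDomain hy (i + 2) (i + 1)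
  constructor <;> unfold optimalControl <;> linarith

lemma mem_switchingDomain_iff_optimalGain_le :
    y ∈ switchingDomain ↔ ∀ i, optimalGain y i ≤ y i :=
  ⟨fun hy i => hy i _ (optimalControl_mem_Icc hy i),
    fun h i u _ => (switchingGain_le_optimalGain y i u).trans (h i)⟩

lemma continuous_optimalGain (i : Fin 3) : Continuous fun y => optimalGain y i := by
  unfold optimalGain switchingGain optimalControl
  fun_prop

lemma mem_interior_switchingDomain (h : ∀ i, optimalGain y i < y i) :
    y ∈ interior switchingDomain := by
  refine mem_interior.2 ⟨{z | ∀ i, optimalGain z i < z i}, ?_, ?_, h⟩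
  · exact fun z hz => mem_switchingDomain_iff_optimalGain_le.2 fun i => (hz i).le
  · simp only [Set.ofPred_forall]
    exact isOpen_iInter_of_finite fun i =>
      isOpen_lt (continuous_optimalGain i) (continuous_apply i)

lemma const_mem_interior_switchingDomain (t : ℝ) :
    (fun _ => t) ∈ interior switchingDomain := by
  refine mem_interior_switchingDomain fun i => ?_
  unfold optimalGain switchingGain optimalControl
  linarith

lemma add_const_mem_switchingDomain (hy : y ∈ switchingDomain) (t : ℝ) :
    y + (fun _ => t) ∈ switchingDomain := fun i u hu => by
  have := hy i u hu
  simp only [switchingGain, Pi.add_apply] at this ⊢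
  linarith

lemma sum_eq_zero_of_mem_outwardNormalCone (hy : y ∈ switchingDomain)
    (hv : v ∈ outwardNormalCone switchingDomain y) : ∑ j, v j = 0 := by
  have hsub : y - 1 ∈ switchingDomain := by
    rw [sub_eq_add_neg]
    exact add_const_mem_switchingDomain hy (-1)
  simpa [dotProduct] using dotProduct_eq_zero_of_mem_outwardNormalCone hv
    (add_const_mem_switchingDomain hy 1) hsub

end Domain

section Boundary

variable {y v : Fin 3 → ℝ} {i : Fin 3} {t u : ℝ}

/-- The boundary arc of the domain on which mode `i` is active with optimal control `u`; `t` is the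
value of mode `i`. -/
def boundaryArc (i : Fin 3) (t u : ℝ) : Fin 3 → ℝ :=
  fun j => t + ![0, 2 * u - u ^ 2, 1 - u ^ 2] (j - i)

/-- Half the velocity of `boundaryArc i t` at the control `u`. -/
def arcTangent (i : Fin 3) (u : ℝ) : Fin 3 → ℝ :=
  fun j => ![0, 1 - u, -u] (j - i)

lemma boundaryArc_apply_self (i : Fin 3) (t u : ℝ) : boundaryArc i t u i = t := by
  simp [boundaryArc]

lemma boundaryArc_apply_add_one (i : Fin 3) (t u : ℝ) :
    boundaryArc i t u (i + 1) = t + (2 * u - u ^ 2) := by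
  simp [boundaryArc]

lemma boundaryArc_apply_add_two (i : Fin 3) (t u : ℝ) :
    boundaryArc i t u (i + 2) = t + (1 - u ^ 2) := by
  simp [boundaryArc]

lemma arcTangent_apply_self (i : Fin 3) (u : ℝ) : arcTangent i u i = 0 := by
  simp [arcTangent]

lemma arcTangent_apply_add_one (i : Fin 3) (u : ℝ) : arcTangent i u (i + 1) = 1 - u := by
  simp [arcTangent]

lemma arcTangent_apply_add_two (i : Fin 3) (u : ℝ) : arcTangent i u (i + 2) = -u := by
  simp [arcTangent]

lemma hasDerivAt_boundaryArc (i : Fin 3) (t u : ℝ) :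
    HasDerivAt (boundaryArc i t) ((2 : ℝ) • arcTangent i u) u := by
  refine hasDerivAt_pi.2 <| (forall_fin_three_cyclic i).2 ⟨?_, ?_, ?_⟩
  · simpa [boundaryArc, arcTangent] using hasDerivAt_const u t
  · have h := (((hasDerivAt_id u).const_mul 2).sub (hasDerivAt_pow 2 u)).const_add t
    simpa [boundaryArc, arcTangent, mul_sub] using h
  · have h := ((hasDerivAt_pow 2 u).const_sub 1).const_add t
    simpa [boundaryArc, arcTangent] using h

lemma arcTangent_dotProduct (i : Fin 3) (u : ℝ) (v : Fin 3 → ℝ) :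
    arcTangent i u ⬝ᵥ v = (1 - u) * v (i + 1) - u * v (i + 2) := by
  rw [dotProduct, sum_fin_three_cyclic i, arcTangent_apply_self, arcTangent_apply_add_one,
    arcTangent_apply_add_two]
  ring

lemma boundaryArc_zero_eq (i : Fin 3) (t : ℝ) : boundaryArc i t 0 = boundaryArc (i + 1) t 1 := by
  refine funext <| (forall_fin_three_cyclic i).2 ⟨?_, ?_, ?_⟩
  · rw [boundaryArc_apply_self, ← fin_three_add_one_add_two i]
    simp [boundaryArc]
  · rw [boundaryArc_apply_self, boundaryArc_apply_add_one]
    ring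
  · rw [boundaryArc_apply_add_two, ← fin_three_add_one_add_one, boundaryArc_apply_add_one]
    ring

lemma boundaryArc_one_eq (i : Fin 3) (t : ℝ) : boundaryArc i t 1 = boundaryArc (i + 2) t 0 := by
  rw [boundaryArc_zero_eq, fin_three_add_two_add_one]

lemma switchingGain_boundaryArc (i : Fin 3) (t u : ℝ) :
    switchingGain (boundaryArc i t u) i u = t := by
  rw [switchingGain, boundaryArc_apply_add_one, boundaryArc_apply_add_two]
  ring

lemma not_forall_switchingGain_boundaryArc_lt (i : Fin 3) (t : ℝ) (hu : u ∈ Set.Icc (0 : ℝ) 1) :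
    ¬ ∀ s ∈ Set.Icc (0 : ℝ) 1,
      switchingGain (boundaryArc i t u) i s < boundaryArc i t u i := fun h =>
  (h u hu).ne ((switchingGain_boundaryArc i t u).trans (boundaryArc_apply_self i t u).symm)

lemma boundaryArc_mem_switchingDomain (i : Fin 3) (t : ℝ) (hu : u ∈ Set.Icc (0 : ℝ) 1) :
    boundaryArc i t u ∈ switchingDomain := by
  obtain ⟨hu0, hu1⟩ := hu
  have hp0 : u ^ 4 ≤ u := by simpa using pow_le_pow_of_le_one hu0 hu1 (show 1 ≤ 4 by simp)
  have hp1 : (1 - u) ^ 4 ≤ 1 - u := by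
    simpa using pow_le_pow_of_le_one (sub_nonneg.2 hu1) (sub_le_self 1 hu0) (show 1 ≤ 4 by simp)
  refine mem_switchingDomain_iff_optimalGain_le.2 <| (forall_fin_three_cyclic i).2 ⟨?_, ?_, ?_⟩ <;>
  simp only [optimalGain, switchingGain, optimalControl, fin_three_add_one_add_one,
    fin_three_add_one_add_two, fin_three_add_two_add_one, fin_three_add_two_add_two,
    boundaryArc_apply_self, boundaryArc_apply_add_one, boundaryArc_apply_add_two] <;>
  linarith

lemma eq_boundaryArc_of_optimalGain_eq (h : optimalGain y i = y i) :
    y = boundaryArc i (y i) (optimalControl y i) := by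
  unfold optimalGain switchingGain at h
  refine funext <| (forall_fin_three_cyclic i).2 ⟨?_, ?_, ?_⟩
  · rw [boundaryArc_apply_self]
  · rw [boundaryArc_apply_add_one]
    unfold optimalControl at h ⊢
    linarith
  · rw [boundaryArc_apply_add_two]
    unfold optimalControl at h ⊢
    linarith

lemma mem_interior_or_exists_eq_boundaryArc (hy : y ∈ switchingDomain) :
    y ∈ interior switchingDomain ∨
      ∃ i t, ∃ u ∈ Set.Icc (0 : ℝ) 1, y = boundaryArc i t u := by
  by_cases h : ∀ i, optimalGain y i < y i
  · exact .inl (mem_interior_switchingDomain h)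
  · push Not at h
    obtain ⟨i, hi⟩ := h
    have hle := mem_switchingDomain_iff_optimalGain_le.1 hy i
    exact .inr ⟨i, _, _, optimalControl_mem_Icc hy i,
      eq_boundaryArc_of_optimalGain_eq (hle.antisymm hi)⟩

lemma sub_mul_arcTangent_dotProduct_nonpos {s : ℝ} (hu : u ∈ Set.Icc (0 : ℝ) 1)
    (hs : s ∈ Set.Icc (0 : ℝ) 1) (hv : v ∈ outwardNormalCone switchingDomain (boundaryArc i t u)) :
    (s - u) * (arcTangent i u ⬝ᵥ v) ≤ 0 := by
  have h := sub_mul_dotProduct_deriv_nonpos (convex_Icc 0 1)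
    (fun r hr => boundaryArc_mem_switchingDomain i t hr) (hasDerivAt_boundaryArc i t u) hu hs hv
  rw [dotProduct_smul, smul_eq_mul, dotProduct_comm] at h
  linarith

lemma mul_arcTangent_dotProduct_nonneg (hu : u ∈ Set.Icc (0 : ℝ) 1)
    (hv : v ∈ outwardNormalCone switchingDomain (boundaryArc i t u)) :
    0 ≤ u * (arcTangent i u ⬝ᵥ v) := by
  simpa using sub_mul_arcTangent_dotProduct_nonpos hu (Set.left_mem_Icc.2 zero_le_one) hv

lemma one_sub_mul_arcTangent_dotProduct_nonpos (hu : u ∈ Set.Icc (0 : ℝ) 1)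
    (hv : v ∈ outwardNormalCone switchingDomain (boundaryArc i t u)) :
    (1 - u) * (arcTangent i u ⬝ᵥ v) ≤ 0 :=
  sub_mul_arcTangent_dotProduct_nonpos hu (Set.right_mem_Icc.2 zero_le_one) hv

lemma one_sub_mul_arcTangent_dotProduct_eq_zero (hu : u ∈ Set.Icc (0 : ℝ) 1) (h0 : u ≠ 0)
    (hv : v ∈ outwardNormalCone switchingDomain (boundaryArc i t u)) :
    (1 - u) * (arcTangent i u ⬝ᵥ v) = 0 := by
  have hpos : 0 < u := hu.1.lt_of_ne' h0
  have hτ := nonneg_of_mul_nonneg_right (mul_arcTangent_dotProduct_nonneg hu hv) hpos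
  exact (one_sub_mul_arcTangent_dotProduct_nonpos hu hv).antisymm
    (mul_nonneg (sub_nonneg.2 hu.2) hτ)

lemma mul_arcTangent_dotProduct_eq_zero (hu : u ∈ Set.Icc (0 : ℝ) 1) (h1 : u ≠ 1)
    (hv : v ∈ outwardNormalCone switchingDomain (boundaryArc i t u)) :
    u * (arcTangent i u ⬝ᵥ v) = 0 := by
  have hpos : 0 < 1 - u := sub_pos.2 (hu.2.lt_of_ne h1)
  have hτ := nonpos_of_mul_nonpos_right (one_sub_mul_arcTangent_dotProduct_nonpos hu hv) hpos
  exact (mul_nonpos_of_nonneg_of_nonpos hu.1 hτ).antisymm (mul_arcTangent_dotProduct_nonneg hu hv)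

lemma apply_nonpos_of_mem_outwardNormalCone_boundaryArc (hu : u ∈ Set.Icc (0 : ℝ) 1)
    (hv : v ∈ outwardNormalCone switchingDomain (boundaryArc i t u)) : v i ≤ 0 := by
  rcases eq_or_ne u 0 with rfl | h0
  · rw [boundaryArc_zero_eq] at hv
    simpa [arcTangent_dotProduct, fin_three_add_one_add_two] using
      mul_arcTangent_dotProduct_nonneg (by simp) hv
  rcases eq_or_ne u 1 with rfl | h1
  · rw [boundaryArc_one_eq] at hv
    simpa [arcTangent_dotProduct, fin_three_add_two_add_one] using
      one_sub_mul_arcTangent_dotProduct_nonpos (by simp) hv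
  have hτ : (1 - u) * v (i + 1) - u * v (i + 2) = 0 := by
    rw [← arcTangent_dotProduct]
    exact (mul_eq_zero_iff_left h0).1 (mul_arcTangent_dotProduct_eq_zero hu h1 hv)
  have hsum := sum_eq_zero_of_mem_outwardNormalCone (boundaryArc_mem_switchingDomain i t hu) hv
  rw [sum_fin_three_cyclic i] at hsum
  have hdiag : 0 ≤ v (i + 1) * (2 * u - u ^ 2) + v (i + 2) * (1 - u ^ 2) := by
    have h := hv _ (interior_subset (const_mem_interior_switchingDomain t))
    rw [dotProduct, sum_fin_three_cyclic i] at h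
    simp only [Pi.sub_apply, boundaryArc_apply_self, boundaryArc_apply_add_one,
      boundaryArc_apply_add_two] at h
    linarith
  -- Here `v = -v i • (-eᵢ + u eᵢ₊₁ + (1 - u) eᵢ₊₂)`, and this row of `P^u - I` takes the arc to the
  -- cost `1 - u (1 - u) > 0`.
  have hcost : v i * (1 - u * (1 - u)) ≤ 0 := by
    have h1 : v (i + 1) = -v i * u := by linear_combination hτ + u * hsum
    have h2 : v (i + 2) = -v i * (1 - u) := by linear_combination -hτ + (1 - u) * hsum
    rw [h1, h2] at hdiag
    linarith
  exact nonpos_of_mul_nonpos_left hcost (by nlinarith [hu.1, hu.2, sq_nonneg (u - 1 / 2)])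

end Boundary

section ReflectionMatrix

variable {y v : Fin 3 → ℝ} {i : Fin 3} {t u : ℝ}

/-- The reflection cone `C_o(y)`: nonpositive vectors supported on the active modes, that is, on the
modes whose constraint in `switchingDomain` is attained by some control. -/
def reflectionCone (y : Fin 3 → ℝ) : Set (Fin 3 → ℝ) :=
  {w | ∀ i, w i ≤ 0 ∧ ((∀ u ∈ Set.Icc (0 : ℝ) 1, switchingGain y i u < y i) → w i = 0)}

/-- A symmetric matrix field that takes the normal cone of the domain into the reflection cone. Its
entries are those of `eᵢ eᵢᵀ + τ τᵀ` expressed through differences of coordinates, the truncations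
`max 0` combining the formulas of the three arcs. Modes being numbered modulo `3`,
`-(i + j)` is the mode different from the distinct modes `i` and `j`. -/
noncomputable def reflectionMatrix (y : Fin 3 → ℝ) : Matrix (Fin 3) (Fin 3) ℝ :=
  .of fun i j =>
    if i = j then 1 - max 0 (max (y i - y (i + 1)) (y i - y (i + 2)))
    else -max 0 ((y i + y j - 2 * y (-(i + j)) - 1) / 2)

lemma reflectionMatrix_apply_self (y : Fin 3 → ℝ) (i : Fin 3) :
    reflectionMatrix y i i = 1 - max 0 (max (y i - y (i + 1)) (y i - y (i + 2))) :=
  if_pos rfl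

lemma reflectionMatrix_apply_add_one_add_two (y : Fin 3 → ℝ) (i : Fin 3) :
    reflectionMatrix y (i + 1) (i + 2) =
      -max 0 ((y (i + 1) + y (i + 2) - 2 * y i - 1) / 2) := by
  have hthird : -(i + 1 + (i + 2)) = i := by revert i; decide
  rw [reflectionMatrix, of_apply, if_neg (by simp), hthird]

lemma reflectionMatrix_isSymm (y : Fin 3 → ℝ) : (reflectionMatrix y).IsSymm := by
  refine .ext fun i j => ?_
  obtain rfl | hij := eq_or_ne i j
  · rfl
  · simp only [reflectionMatrix, of_apply, if_neg hij, if_neg hij.symm, add_comm]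

lemma continuous_reflectionMatrix : Continuous reflectionMatrix := by
  refine continuous_matrix fun i j => ?_
  simp only [reflectionMatrix, of_apply]
  split_ifs <;> fun_prop

lemma abs_reflectionMatrix_le_one (hy : y ∈ switchingDomain) (i j : Fin 3) :
    |reflectionMatrix y i j| ≤ 1 := by
  have hle := le_add_one_of_mem_switchingDomain hy
  simp only [reflectionMatrix, of_apply]
  split_ifs
  · have hmax : max 0 (max (y i - y (i + 1)) (y i - y (i + 2))) ≤ 1 :=
      max_le zero_le_one (max_le (by linarith [hle (i + 1) i]) (by linarith [hle (i + 2) i]))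
    rw [abs_le]
    constructor <;> linarith [le_max_left 0 (max (y i - y (i + 1)) (y i - y (i + 2)))]
  · rw [abs_neg, abs_of_nonneg (le_max_left _ _)]
    exact max_le zero_le_one (by linarith [hle (-(i + j)) i, hle (-(i + j)) j])

lemma reflectionMatrix_boundaryArc_apply_self (i j : Fin 3) (t : ℝ)
    (hu : u ∈ Set.Icc (0 : ℝ) 1) : reflectionMatrix (boundaryArc i t u) j j =
      (Pi.single i 1 : Fin 3 → ℝ) j + arcTangent i u j ^ 2 := by
  obtain ⟨hu0, hu1⟩ := hu
  have huu : 0 ≤ u * (1 - u) := mul_nonneg hu0 (sub_nonneg.2 hu1)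
  rw [reflectionMatrix_apply_self]
  revert j
  refine (forall_fin_three_cyclic i).2 ⟨?_, ?_, ?_⟩
  · rw [boundaryArc_apply_self, boundaryArc_apply_add_one, boundaryArc_apply_add_two,
      max_eq_left (max_le (by linarith) (by linarith)), Pi.single_eq_same, arcTangent_apply_self]
    ring
  · rw [fin_three_add_one_add_one, fin_three_add_one_add_two, boundaryArc_apply_self,
      boundaryArc_apply_add_one, boundaryArc_apply_add_two, max_eq_right (a := _ - _) (by linarith),
      max_eq_right (by linarith), Pi.single_eq_of_ne (by simp), arcTangent_apply_add_one]
    ring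
  · rw [fin_three_add_two_add_one, fin_three_add_two_add_two, boundaryArc_apply_self,
      boundaryArc_apply_add_one, boundaryArc_apply_add_two, max_eq_left (a := _ - _) (by linarith),
      max_eq_right (by linarith), Pi.single_eq_of_ne (by simp), arcTangent_apply_add_two]
    ring

lemma reflectionMatrix_boundaryArc_apply_add_one_add_two (i j : Fin 3) (t : ℝ)
    (hu : u ∈ Set.Icc (0 : ℝ) 1) : reflectionMatrix (boundaryArc i t u) (j + 1) (j + 2) =
      arcTangent i u (j + 1) * arcTangent i u (j + 2) := by
  obtain ⟨hu0, hu1⟩ := hu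
  have huu : 0 ≤ u * (1 - u) := mul_nonneg hu0 (sub_nonneg.2 hu1)
  rw [reflectionMatrix_apply_add_one_add_two]
  revert j
  refine (forall_fin_three_cyclic i).2 ⟨?_, ?_, ?_⟩
  · rw [boundaryArc_apply_self, boundaryArc_apply_add_one, boundaryArc_apply_add_two,
      max_eq_right (by linarith), arcTangent_apply_add_one, arcTangent_apply_add_two]
    ring
  · rw [fin_three_add_one_add_one, fin_three_add_one_add_two, boundaryArc_apply_self,
      boundaryArc_apply_add_one, boundaryArc_apply_add_two, max_eq_left (by linarith),
      arcTangent_apply_self, neg_zero, mul_zero]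
  · rw [fin_three_add_two_add_one, fin_three_add_two_add_two, boundaryArc_apply_self,
      boundaryArc_apply_add_one, boundaryArc_apply_add_two, max_eq_left (by nlinarith),
      arcTangent_apply_self, neg_zero, zero_mul]

lemma reflectionMatrix_boundaryArc (i : Fin 3) (t : ℝ) (hu : u ∈ Set.Icc (0 : ℝ) 1) :
    reflectionMatrix (boundaryArc i t u) =
      diagonal (Pi.single i 1) + vecMulVec (arcTangent i u) (arcTangent i u) := by
  refine eq_of_isSymm_fin_three (reflectionMatrix_isSymm _)
    ((isSymm_diagonal _).add (transpose_vecMulVec _ _)) (fun j => ?_) fun j => ?_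
  · rw [reflectionMatrix_boundaryArc_apply_self i j t hu, Matrix.add_apply, diagonal_apply_eq,
      vecMulVec_apply, sq]
  · rw [reflectionMatrix_boundaryArc_apply_add_one_add_two i j t hu, Matrix.add_apply,
      diagonal_apply_ne _ (by simp), vecMulVec_apply, zero_add]

lemma reflectionMatrix_boundaryArc_mulVec (i : Fin 3) (t : ℝ) (hu : u ∈ Set.Icc (0 : ℝ) 1)
    (v : Fin 3 → ℝ) : reflectionMatrix (boundaryArc i t u) *ᵥ v =
      Pi.single i (v i) + (arcTangent i u ⬝ᵥ v) • arcTangent i u := by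
  rw [reflectionMatrix_boundaryArc i t hu, add_mulVec, vecMulVec_mulVec, op_smul_eq_smul]
  congr 1
  ext j
  rw [mulVec_diagonal]
  obtain rfl | hij := eq_or_ne j i <;> simp [*]

lemma reflectionMatrix_boundaryArc_mulVec_mem_reflectionCone (hu : u ∈ Set.Icc (0 : ℝ) 1)
    (hv : v ∈ outwardNormalCone switchingDomain (boundaryArc i t u)) :
    reflectionMatrix (boundaryArc i t u) *ᵥ v ∈ reflectionCone (boundaryArc i t u) := by
  set w := reflectionMatrix (boundaryArc i t u) *ᵥ v with hw
  rw [reflectionMatrix_boundaryArc_mulVec i t hu] at hw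
  have hself : w i = v i := by simp [hw, arcTangent_apply_self]
  have hone : w (i + 1) = (1 - u) * (arcTangent i u ⬝ᵥ v) := by
    simp [hw, arcTangent_apply_add_one, mul_comm]
  have htwo : w (i + 2) = -(u * (arcTangent i u ⬝ᵥ v)) := by
    simp [hw, arcTangent_apply_add_two, mul_comm]
  refine (forall_fin_three_cyclic i).2 ⟨?_, ?_, ?_⟩
  · rw [hself]
    exact ⟨apply_nonpos_of_mem_outwardNormalCone_boundaryArc hu hv,
      fun h => absurd h (not_forall_switchingGain_boundaryArc_lt i t hu)⟩
  · rw [hone]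
    refine ⟨one_sub_mul_arcTangent_dotProduct_nonpos hu hv, fun h => ?_⟩
    refine one_sub_mul_arcTangent_dotProduct_eq_zero hu ?_ hv
    rintro rfl
    rw [boundaryArc_zero_eq] at h
    exact not_forall_switchingGain_boundaryArc_lt (i + 1) t (by simp) h
  · rw [htwo]
    refine ⟨neg_nonpos.2 (mul_arcTangent_dotProduct_nonneg hu hv), fun h => ?_⟩
    refine neg_eq_zero.2 (mul_arcTangent_dotProduct_eq_zero hu ?_ hv)
    rintro rfl
    rw [boundaryArc_one_eq] at h
    exact not_forall_switchingGain_boundaryArc_lt (i + 2) t (by simp) h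

lemma reflectionMatrix_mulVec_mem_reflectionCone (hy : y ∈ switchingDomain)
    (hv : v ∈ outwardNormalCone switchingDomain y) :
    reflectionMatrix y *ᵥ v ∈ reflectionCone y := by
  rcases mem_interior_or_exists_eq_boundaryArc hy with hint | ⟨i, t, u, hu, rfl⟩
  · obtain rfl := eq_zero_of_mem_outwardNormalCone_of_mem_interior hv hint
    simp [reflectionCone]
  · exact reflectionMatrix_boundaryArc_mulVec_mem_reflectionCone hu hv

lemma dotProduct_self_div_three_le_sq_add_sq_arcTangent_dotProduct (i : Fin 3)
    (hu : u ∈ Set.Icc (0 : ℝ) 1) (hsum : ∑ j, v j = 0) :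
    (v ⬝ᵥ v) / 3 ≤ v i ^ 2 + (arcTangent i u ⬝ᵥ v) ^ 2 := by
  have hsos : v i ^ 2 + (arcTangent i u ⬝ᵥ v) ^ 2 - (v ⬝ᵥ v) / 3 =
      ((arcTangent i u ⬝ᵥ v + (2 * u - 1) * v i) ^ 2 + 6 * (u * (1 - u)) * v i ^ 2) / 3 := by
    rw [sum_fin_three_cyclic i] at hsum
    rw [arcTangent_dotProduct, dotProduct, sum_fin_three_cyclic i,
      show v i = -(v (i + 1) + v (i + 2)) by linarith]
    ring
  have hu' : 0 ≤ u * (1 - u) := mul_nonneg hu.1 (sub_nonneg.2 hu.2)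
  exact sub_nonneg.1 (hsos ▸ by positivity)

lemma dotProduct_self_div_three_le_dotProduct_reflectionMatrix_mulVec (hy : y ∈ switchingDomain)
    (hv : v ∈ outwardNormalCone switchingDomain y) :
    (v ⬝ᵥ v) / 3 ≤ v ⬝ᵥ (reflectionMatrix y *ᵥ v) := by
  rcases mem_interior_or_exists_eq_boundaryArc hy with hint | ⟨i, t, u, hu, rfl⟩
  · simp [eq_zero_of_mem_outwardNormalCone_of_mem_interior hv hint]
  · have hquad : v ⬝ᵥ (reflectionMatrix (boundaryArc i t u) *ᵥ v) =
        v i ^ 2 + (arcTangent i u ⬝ᵥ v) ^ 2 := by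
      rw [reflectionMatrix_boundaryArc_mulVec i t hu, dotProduct_add, dotProduct_single,
        dotProduct_smul, dotProduct_comm v (arcTangent i u), smul_eq_mul, sq, sq]
    exact hquad ▸ dotProduct_self_div_three_le_sq_add_sq_arcTangent_dotProduct i hu
      (sum_eq_zero_of_mem_outwardNormalCone hy hv)

open Classical in
/-- The matrix field `H` of the theorem; outside the domain any matrix coercive on all of `ℝ³` would
do, and the identity is chosen. -/
noncomputable def reflectionOperator (y : Fin 3 → ℝ) : Matrix (Fin 3) (Fin 3) ℝ :=
  if y ∈ switchingDomain then reflectionMatrix y else 1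

lemma reflectionOperator_eqOn : Set.EqOn reflectionOperator reflectionMatrix switchingDomain :=
  fun _ hy => if_pos hy

lemma reflectionOperator_of_notMem (hy : y ∉ switchingDomain) : reflectionOperator y = 1 :=
  if_neg hy

lemma continuousOn_reflectionOperator : ContinuousOn reflectionOperator switchingDomain :=
  continuous_reflectionMatrix.continuousOn.congr reflectionOperator_eqOn

lemma abs_reflectionOperator_le_one (y : Fin 3 → ℝ) (i j : Fin 3) :
    |reflectionOperator y i j| ≤ 1 := by
  by_cases hy : y ∈ switchingDomain
  · rw [reflectionOperator_eqOn hy]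
    exact abs_reflectionMatrix_le_one hy i j
  · rw [reflectionOperator_of_notMem hy, one_apply]
    split_ifs <;> simp

lemma one_third_le_dotProduct_reflectionOperator_mulVec {p : Fin 3 → ℝ}
    (hproj : ∀ w ∈ switchingDomain, ∑ i, (y i - p i) ^ 2 ≤ ∑ i, (y i - w i) ^ 2)
    (hv : v ∈ outwardNormalCone switchingDomain p) (hunit : v ⬝ᵥ v = 1) :
    1 / 3 ≤ v ⬝ᵥ (reflectionOperator y *ᵥ v) := by
  by_cases hy : y ∈ switchingDomain
  · obtain rfl := eq_of_sum_sub_sq_le (hproj y hy)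
    rw [reflectionOperator_eqOn hy, ← hunit]
    exact dotProduct_self_div_three_le_dotProduct_reflectionMatrix_mulVec hy hv
  · rw [reflectionOperator_of_notMem hy, one_mulVec, hunit]
    norm_num

end ReflectionMatrix

lemma sum_switchingMatrix_mul (y : Fin 3 → ℝ) (i : Fin 3) (u : ℝ) :
    ∑ j, !![0, u, 1 - u; 1 - u, 0, u; u, 1 - u, 0] i j * y j =
      u * y (i + 1) + (1 - u) * y (i + 2) := by
  fin_cases i <;> simp [Fin.sum_univ_three, add_comm]

/-- The 3-dimensional switching problem with controlled
randomisation, with `𝒞 = [0,1]`, transition matrices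
`P^u = !![0, u, 1−u; 1−u, 0, u; u, 1−u, 0]` and costs `c̄^u_i = 1 − u(1−u)`.
The domain `D` has nonempty interior, and there exist `H : ℝ³ → ℝ^{3×3}` and
constants `η > 0`, `L ≥ 0` such that:
(1) `|H(y')| ≤ L` (entrywise); (2) `H` is continuous on `D`;
(3) `vᵀ H(y') v ≥ η` for every unit vector `v` in the outward normal cone of `D`
at the Euclidean projection of `y'` onto `D`;
(4) for every `y ∈ D` and `v` in the normal cone at `y`, `H(y) v` lies in the
reflection cone `C_o(y)`. -/
theorem existence_of_oblique_reflection_operator_controlled_example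
    (Pu : ℝ → Matrix (Fin 3) (Fin 3) ℝ)
    (hPu : ∀ u : ℝ, Pu u = !![0, u, 1 - u; 1 - u, 0, u; u, 1 - u, 0])
    (D : Set (Fin 3 → ℝ))
    (hD : D = {y | ∀ i : Fin 3, ∀ u ∈ Set.Icc (0 : ℝ) 1,
      (∑ j, Pu u i j * y j) - (1 - u * (1 - u)) ≤ y i}) :
    (interior D).Nonempty ∧
    ∃ (H : (Fin 3 → ℝ) → Matrix (Fin 3) (Fin 3) ℝ) (η L : ℝ),
      0 < η ∧ 0 ≤ L ∧
      (∀ y' i j, |H y' i j| ≤ L) ∧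
      (∀ i j, ContinuousOn (fun y => H y i j) D) ∧
      (∀ y' p : Fin 3 → ℝ, p ∈ D →
        (∀ w ∈ D, (∑ i, (y' i - p i) ^ 2) ≤ ∑ i, (y' i - w i) ^ 2) →
        ∀ v : Fin 3 → ℝ, (∑ i, (v i) ^ 2) = 1 →
          (∀ z ∈ D, (∑ i, v i * (z i - p i)) ≤ 0) →
          η ≤ v ⬝ᵥ (H y' *ᵥ v)) ∧
      (∀ y ∈ D, ∀ v : Fin 3 → ℝ,
        (∀ z ∈ D, (∑ i, v i * (z i - y i)) ≤ 0) →
        ∃ α : Fin 3 → ℝ, (∀ i, 0 ≤ α i) ∧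
          (∀ i : Fin 3, (∀ u ∈ Set.Icc (0 : ℝ) 1,
            (∑ j, Pu u i j * y j) - (1 - u * (1 - u)) < y i) → α i = 0) ∧
          H y *ᵥ v = -α) := by
  simp only [hPu, sum_switchingMatrix_mul] at hD ⊢
  obtain rfl : D = switchingDomain := hD
  refine ⟨⟨_, const_mem_interior_switchingDomain 0⟩, reflectionOperator, 1 / 3, 1, by norm_num,
    zero_le_one, abs_reflectionOperator_le_one, fun i j => ?_, ?_, ?_⟩
  · exact (continuous_apply_apply i j).comp_continuousOn continuousOn_reflectionOperator
  · intro y p _ hproj v hunit hv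
    refine one_third_le_dotProduct_reflectionOperator_mulVec hproj hv ?_
    simpa [dotProduct, sq] using hunit
  · intro y hy v hv
    have hmem := reflectionMatrix_mulVec_mem_reflectionCone hy hv
    rw [reflectionOperator_eqOn hy]
    exact ⟨-(reflectionMatrix y *ᵥ v), fun i => neg_nonneg.2 (hmem i).1,
      fun i h => neg_eq_zero.2 ((hmem i).2 h), (neg_neg _).symm⟩
end

section
/- Consider the controlled setting where 𝒞 is a compact metric space, u ↦ P^u_{i,j} and u ↦ c̄^u_i are continuous for all i,j, and every P^u is irreducible with invariant probability μ^u. Define Ĉ_{i,j} := min_{u∈𝒞} C^u_{i,j}, where C^u is the cost matrix associated with (P^u, c̄^u). If the domain D is nonempty, then: (1) min_{u∈𝒞} ∑_{i=1}^d μ^u_i c̄^u_i ≥ 0; (2) Ĉ_{i,j} + Ĉ_{j,i} ≥ 0 for all 1 ≤ i ≠ j ≤ d; and (3) D_∘ = D ∩ {y ∈ ℝ^d : y_d = 0} is a compact subset of ℝ^d. If moreover D has nonempty interior, then min_{u∈𝒞} ∑_i μ^u_i c̄^u_i > 0 and Ĉ_{i,j} + Ĉ_{j,i} > 0 for all 1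 ≤ i ≠ j ≤ d. -/
open Matrix

/-!
Everything rests on a minimum principle: if `P` is irreducible and stochastic and `P v ≤ v` away
from a state `j`, then `v` attains its minimum at `j`, since the set of minimizers is closed under
the transitions of `P` as long as it avoids `j`. It makes the matrix `1 - P` with row and column
`j` deleted invertible, so that `C · j` is characterized by its first-step equations, and applied
to `C · j + y` it gives `y j - y i ≤ C i j` for every `y ∈ D`. These inequalities bound the slice
of `D` and, comparing `y` with `y - ε e_j`, show `Ĉ i j + Ĉ j i ≥ ε` if `D` contains both points.
Integrating the inequality that defines `D` against `μ` gives the bounds on `∑ i, μ i * c i`: at an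
interior point that inequality has slack at least `ε (1 - P i i)` in every row `i`.
-/

section StochasticMatrix

variable {R ι : Type*} [CommRing R] [LinearOrder R]

theorem mem_of_isIrreducible_of_forall_pos {A : Matrix ι ι R} (hA : A.IsIrreducible) {S : Set ι}
    (hS : ∀ i ∈ S, ∀ j, 0 < A i j → j ∈ S) {i : ι} (hi : i ∈ S) (j : ι) : j ∈ S := by
  let : Quiver ι := toQuiver A
  obtain ⟨p, -⟩ := hA.connected i j
  induction p with
  | nil => exact hi
  | cons _ e ih => exact hS _ ih _ e.down

variable [IsStrictOrderedRing R] [Fintype ι] {P : Matrix ι ι R}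

theorem le_of_mulVec_le_of_ne (hP : P.IsIrreducible) (hrow : ∀ i, ∑ j, P i j = 1) {v : ι → R}
    {j : ι} (hv : ∀ i, i ≠ j → (P *ᵥ v) i ≤ v i) (i : ι) : v j ≤ v i := by
  have : Nonempty ι := ⟨j⟩
  obtain ⟨a, ha⟩ := Finite.exists_min v
  refine le_trans ?_ (ha i)
  by_contra! hja
  have hclosed : ∀ k ∈ {k | v k = v a}, ∀ l, 0 < P k l → l ∈ {k | v k = v a} := by
    intro k (hk : v k = v a) l hkl
    have hkj : k ≠ j := by
      rintro rfl
      exact hja.ne' hk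
    have hterm_nonneg : ∀ q, 0 ≤ P k q * (v q - v a) := fun q =>
      mul_nonneg (hP.nonneg k q) (sub_nonneg.2 (ha q))
    have hsum : ∑ q, P k q * (v q - v a) ≤ 0 := by
      simp only [mul_sub, Finset.sum_sub_distrib, ← Finset.sum_mul, hrow, one_mul]
      exact sub_nonpos.2 ((hv k hkj).trans_eq hk)
    have hterm : P k l * (v l - v a) ≤ 0 :=
      (Finset.single_le_sum (fun q _ => hterm_nonneg q) (Finset.mem_univ l)).trans hsum
    exact le_antisymm (sub_nonpos.1 (nonpos_of_mul_nonpos_right hterm hkl)) (ha l)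
  exact hja.ne' (mem_of_isIrreducible_of_forall_pos hP hclosed rfl j)

theorem diag_lt_one_of_isIrreducible [Nontrivial ι] (hP : P.IsIrreducible)
    (hrow : ∀ i, ∑ j, P i j = 1) (i : ι) : P i i < 1 := by
  classical
  by_contra! hi
  obtain ⟨j, hji⟩ := exists_ne i
  -- If `i` were absorbing, then `-1_{i}` would contradict the minimum principle.
  have hv : ∀ k, k ≠ j → (P *ᵥ Pi.single i (-1)) k ≤ (Pi.single i (-1) : ι → R) k := by
    intro k _
    obtain rfl | hki := eq_or_ne k i
    · simpa using hi
    · simpa [hki] using hP.nonneg k i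
  have := le_of_mulVec_le_of_ne hP hrow hv i
  norm_num [hji] at this

theorem le_dotProduct_of_mulVec_sub_add_le {μ c y : ι → R} {η : R} (hμ : μ ∈ stdSimplex R ι)
    (hinv : μ ᵥ* P = μ) (hy : ∀ i, (P *ᵥ y) i - c i + η ≤ y i) : η ≤ μ ⬝ᵥ c := by
  have hle : μ ⬝ᵥ (P *ᵥ y + fun _ => η) ≤ μ ⬝ᵥ (y + c) :=
    dotProduct_le_dotProduct_of_nonneg_left
      (fun i => by simpa using by linarith [hy i] : P *ᵥ y + (fun _ => η) ≤ y + c) hμ.1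
  have hconst : μ ⬝ᵥ (fun _ => η) = η := by
    rw [dotProduct, ← Finset.sum_mul, hμ.2, one_mul]
  rwa [dotProduct_add, dotProduct_add, dotProduct_mulVec, hinv, hconst, add_le_add_iff_left] at hle

/-- `v i` is the expected cost that the chain with transition matrix `P`, started in `i`, incurs
before it hits `j`, when each visit to a state `k` costs `c k`. It is encoded by the first-step
equations. -/
structure IsHittingCost (P : Matrix ι ι R) (c v : ι → R) (j : ι) : Prop where
  target : v j = 0
  first_step : ∀ i, i ≠ j → v i = (P *ᵥ v) i + c i

theorem IsHittingCost.sub_le {c v y : ι → R} {j : ι} (hv : IsHittingCost P c v j)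
    (hP : P.IsIrreducible) (hrow : ∀ i, ∑ j, P i j = 1) (hy : ∀ i, (P *ᵥ y) i - c i ≤ y i)
    (i : ι) : y j - y i ≤ v i := by
  have hmin := le_of_mulVec_le_of_ne (v := v + y) hP hrow (j := j) (fun k hk => by
    rw [mulVec_add, Pi.add_apply, Pi.add_apply]
    linarith [hv.first_step k hk, hy k]) i
  simp only [Pi.add_apply, hv.target] at hmin
  linarith

end StochasticMatrix

section DeletedMatrix

theorem one_sub_submatrix_succAbove_mulVec {R : Type*} [Ring R] {n : ℕ}
    {P : Matrix (Fin (n + 1)) (Fin (n + 1)) R} {v : Fin (n + 1) → R} {j : Fin (n + 1)}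
    (hj : v j = 0) (k : Fin n) :
    ((1 - P).submatrix j.succAbove j.succAbove *ᵥ fun l => v (j.succAbove l)) k =
      v (j.succAbove k) - (P *ᵥ v) (j.succAbove k) := by
  have hfull : ((1 - P) *ᵥ v) (j.succAbove k) = v (j.succAbove k) - (P *ᵥ v) (j.succAbove k) := by
    rw [sub_mulVec, one_mulVec, Pi.sub_apply]
  rw [← hfull, mulVec, mulVec, dotProduct, dotProduct, Fin.sum_univ_succAbove _ j, hj, mul_zero,
    zero_add]
  rfl

variable {𝕜 : Type*} [Field 𝕜] [LinearOrder 𝕜] [IsStrictOrderedRing 𝕜] {n : ℕ}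
  {P : Matrix (Fin (n + 1)) (Fin (n + 1)) 𝕜}

theorem isUnit_one_sub_submatrix_succAbove (hP : P.IsIrreducible) (hrow : ∀ i, ∑ j, P i j = 1)
    (j : Fin (n + 1)) : IsUnit ((1 - P).submatrix j.succAbove j.succAbove) := by
  set A := (1 - P).submatrix j.succAbove j.succAbove
  have hnonneg : ∀ x, A *ᵥ x = 0 → ∀ k, 0 ≤ x k := by
    intro x hx k
    let v : Fin (n + 1) → 𝕜 := j.insertNth 0 x
    have hvj : v j = 0 := Fin.insertNth_apply_same ..
    have hvx : (fun l => v (j.succAbove l)) = x := funext fun l => Fin.insertNth_apply_succAbove ..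
    have hharm : ∀ i, i ≠ j → (P *ᵥ v) i ≤ v i := by
      intro i hi
      obtain ⟨l, rfl⟩ := Fin.exists_succAbove_eq hi
      have hl := one_sub_submatrix_succAbove_mulVec (P := P) hvj l
      rw [hvx, hx] at hl
      exact (sub_eq_zero.1 hl.symm).ge
    simpa only [hvj, ← hvx] using le_of_mulVec_le_of_ne hP hrow hharm (j.succAbove k)
  rw [← mulVec_injective_iff_isUnit]
  refine (injective_iff_map_eq_zero A.mulVecLin).2 fun x hx => ?_
  have hneg : A *ᵥ (-x) = 0 := by rw [mulVec_neg, neg_eq_zero]; exact hx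
  exact funext fun k => le_antisymm (neg_nonneg.1 (hnonneg (-x) hneg k)) (hnonneg x hx k)

theorem isHittingCost_of_eq_inv_mulVec (hP : P.IsIrreducible) (hrow : ∀ i, ∑ j, P i j = 1)
    {c v : Fin (n + 1) → 𝕜} {j : Fin (n + 1)} (hj : v j = 0)
    (hv : ∀ k, v (j.succAbove k) =
      (((1 - P).submatrix j.succAbove j.succAbove)⁻¹ *ᵥ fun l => c (j.succAbove l)) k) :
    IsHittingCost P c v j where
  target := hj
  first_step i hi := by
    obtain ⟨k, rfl⟩ := Fin.exists_succAbove_eq hi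
    have hdet := (isUnit_iff_isUnit_det _).1 (isUnit_one_sub_submatrix_succAbove hP hrow j)
    have hk := one_sub_submatrix_succAbove_mulVec (P := P) hj k
    rw [funext hv, mulVec_mulVec, mul_nonsing_inv _ hdet, one_mulVec] at hk
    linarith

end DeletedMatrix

theorem exists_pos_forall_sub_single_mem {ι : Type*} [Finite ι] [DecidableEq ι] {s : Set (ι → ℝ)}
    {y : ι → ℝ} (hy : y ∈ interior s) : ∃ ε > 0, ∀ i, y - Pi.single i ε ∈ s := by
  have hnear (i : ι) : ∀ᶠ ε : ℝ in nhds 0, y - Pi.single i ε ∈ s := by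
    have hcont : Continuous fun ε : ℝ => y - Pi.single i ε :=
      continuous_const.sub (continuous_single (A := fun _ => ℝ) i)
    exact hcont.continuousAt.eventually_mem (by simpa using mem_interior_iff_mem_nhds.1 hy)
  have hpos : ∀ᶠ ε : ℝ in nhdsWithin 0 (Set.Ioi 0), 0 < ε := self_mem_nhdsWithin
  exact (hpos.and ((Filter.eventually_all.2 hnear).filter_mono nhdsWithin_le_nhds)).exists

section ControlledDomain

variable {𝒞 ι : Type*} [Fintype ι] {P : 𝒞 → Matrix ι ι ℝ} {c : 𝒞 → ι → ℝ}

/-- The domain `D` of the controlled problem. The supremum over the controls is written as a family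
of inequalities, because the real supremum of an unbounded set is `0`. -/
def controlledDomain (P : 𝒞 → Matrix ι ι ℝ) (c : 𝒞 → ι → ℝ) : Set (ι → ℝ) :=
  {y | ∀ i, ∀ u, (P u *ᵥ y) i - c u i ≤ y i}

theorem isClosed_controlledDomain : IsClosed (controlledDomain P c) := by
  simp only [controlledDomain, Set.ofPred_forall]
  exact isClosed_iInter fun i => isClosed_iInter fun u =>
    isClosed_le (by fun_prop) (continuous_apply i)

theorem mulVec_sub_add_le_of_sub_single_mem [DecidableEq ι] {y : ι → ℝ} {i : ι} {ε : ℝ}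
    (hy : y - Pi.single i ε ∈ controlledDomain P c) (u : 𝒞) :
    (P u *ᵥ y) i - c u i + ε * (1 - P u i i) ≤ y i := by
  have hi := hy i u
  simp only [mulVec_sub, Pi.sub_apply, mulVec_single, Pi.single_eq_same, Pi.smul_apply,
    col_apply, op_smul_eq_mul] at hi
  linarith

theorem exists_lt_one_forall_diag_le [TopologicalSpace 𝒞] [CompactSpace 𝒞] [Nonempty 𝒞]
    [Nontrivial ι] (hcont : ∀ i, Continuous fun u => P u i i) (hP : ∀ u, (P u).IsIrreducible)
    (hrow : ∀ u i, ∑ j, P u i j = 1) : ∃ r < 1, ∀ u i, P u i i ≤ r := by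
  let : TopologicalSpace ι := ⊥
  have : DiscreteTopology ι := ⟨rfl⟩
  have hdiag : Continuous fun q : 𝒞 × ι => P q.1 q.2 q.2 :=
    continuous_prod_of_discrete_right.2 hcont
  obtain ⟨⟨u, i⟩, -, hmax⟩ := isCompact_univ.exists_isMaxOn Set.univ_nonempty hdiag.continuousOn
  exact ⟨P u i i, diag_lt_one_of_isIrreducible (hP u) (hrow u) i,
    fun v j => hmax (Set.mem_univ (v, j))⟩

variable [Nonempty 𝒞]

theorem iInf_dotProduct_nonneg {μ : 𝒞 → ι → ℝ} (hμ : ∀ u, μ u ∈ stdSimplex ℝ ι)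
    (hinv : ∀ u, μ u ᵥ* P u = μ u) (hD : (controlledDomain P c).Nonempty) :
    0 ≤ ⨅ u, μ u ⬝ᵥ c u := by
  obtain ⟨y, hy⟩ := hD
  exact le_ciInf fun u => le_dotProduct_of_mulVec_sub_add_le (hμ u) (hinv u) fun i =>
    (add_zero _).trans_le (hy i u)

theorem iInf_dotProduct_pos {μ : 𝒞 → ι → ℝ} (hμ : ∀ u, μ u ∈ stdSimplex ℝ ι)
    (hinv : ∀ u, μ u ᵥ* P u = μ u) {r : ℝ} (hr : r < 1) (hdiag : ∀ u i, P u i i ≤ r)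
    (hD : (interior (controlledDomain P c)).Nonempty) : 0 < ⨅ u, μ u ⬝ᵥ c u := by
  classical
  obtain ⟨y, hy⟩ := hD
  obtain ⟨ε, hε, hmem⟩ := exists_pos_forall_sub_single_mem hy
  refine (mul_pos hε (sub_pos.2 hr)).trans_le (le_ciInf fun u => ?_)
  refine le_dotProduct_of_mulVec_sub_add_le (y := y) (hμ u) (hinv u) fun i => ?_
  calc (P u *ᵥ y) i - c u i + ε * (1 - r)
      ≤ (P u *ᵥ y) i - c u i + ε * (1 - P u i i) := by gcongr; exact hdiag u i
    _ ≤ y i := mulVec_sub_add_le_of_sub_single_mem (hmem i) u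

variable {C : 𝒞 → ι → ι → ℝ} (hP : ∀ u, (P u).IsIrreducible) (hrow : ∀ u i, ∑ j, P u i j = 1)
  (hC : ∀ u j, IsHittingCost (P u) (c u) (fun i => C u i j) j)

include hP hrow hC

theorem sub_le_iInf_hittingCost {y : ι → ℝ} (hy : y ∈ controlledDomain P c) (i j : ι) :
    y j - y i ≤ ⨅ u, C u i j :=
  le_ciInf fun u => (hC u j).sub_le (hP u) (hrow u) (fun k => hy k u) i

theorem iInf_hittingCost_add_nonneg (hD : (controlledDomain P c).Nonempty) (i j : ι) :
    0 ≤ (⨅ u, C u i j) + ⨅ u, C u j i := by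
  obtain ⟨y, hy⟩ := hD
  linarith [sub_le_iInf_hittingCost hP hrow hC hy i j, sub_le_iInf_hittingCost hP hrow hC hy j i]

theorem iInf_hittingCost_add_pos (hD : (interior (controlledDomain P c)).Nonempty) {i j : ι}
    (hij : i ≠ j) : 0 < (⨅ u, C u i j) + ⨅ u, C u j i := by
  classical
  obtain ⟨y, hy⟩ := hD
  obtain ⟨ε, hε, hmem⟩ := exists_pos_forall_sub_single_mem hy
  have hle := sub_le_iInf_hittingCost hP hrow hC (interior_subset hy) i j
  have hle' := sub_le_iInf_hittingCost hP hrow hC (hmem j) j i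
  simp only [Pi.sub_apply, Pi.single_eq_same, Pi.single_eq_of_ne hij] at hle'
  linarith

theorem isCompact_controlledDomain_inter (o : ι) :
    IsCompact (controlledDomain P c ∩ {y | y o = 0}) := by
  obtain ⟨u⟩ := ‹Nonempty 𝒞›
  refine (isCompact_Icc (a := fun i => -C u i o) (b := fun i => C u o i)).of_isClosed_subset
    (isClosed_controlledDomain.inter (isClosed_eq (continuous_apply o) continuous_const)) ?_
  rintro y ⟨hy, hyo : y o = 0⟩
  have hle i j : y j - y i ≤ C u i j := (hC u j).sub_le (hP u) (hrow u) (fun k => hy k u) i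
  exact ⟨fun i => by linarith [hle i o], fun i => by linarith [hle o i]⟩

end ControlledDomain

theorem controlled_nonempty_domain_necessary_conditions_general {𝒞 ι : Type*} [Nonempty 𝒞]
    [Fintype ι] {P : 𝒞 → Matrix ι ι ℝ} {c μ : 𝒞 → ι → ℝ} {C : 𝒞 → ι → ι → ℝ}
    (hP : ∀ u, (P u).IsIrreducible) (hrow : ∀ u i, ∑ j, P u i j = 1)
    (hμ : ∀ u, μ u ∈ stdSimplex ℝ ι) (hinv : ∀ u, μ u ᵥ* P u = μ u)
    (hC : ∀ u j, IsHittingCost (P u) (c u) (fun i => C u i j) j) (o : ι) :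
    ((controlledDomain P c).Nonempty →
      0 ≤ (⨅ u, μ u ⬝ᵥ c u) ∧
      (∀ i j, i ≠ j → 0 ≤ (⨅ u, C u i j) + ⨅ u, C u j i) ∧
      IsCompact (controlledDomain P c ∩ {y | y o = 0})) ∧
    ((interior (controlledDomain P c)).Nonempty →
      ((∃ r < 1, ∀ u i, P u i i ≤ r) → 0 < ⨅ u, μ u ⬝ᵥ c u) ∧
      (∀ i j, i ≠ j → 0 < (⨅ u, C u i j) + ⨅ u, C u j i)) :=
  ⟨fun hD => ⟨iInf_dotProduct_nonneg hμ hinv hD,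
      fun i j _ => iInf_hittingCost_add_nonneg hP hrow hC hD i j,
      isCompact_controlledDomain_inter hP hrow hC o⟩,
    fun hD => ⟨fun ⟨_, hr, hdiag⟩ => iInf_dotProduct_pos hμ hinv hr hdiag hD,
      fun _ _ hij => iInf_hittingCost_add_pos hP hrow hC hD hij⟩⟩

/-- Controlled setting: `𝒞` a compact metric space,
`u ↦ P u i j` and `u ↦ c u i` continuous, every `P u` irreducible with invariant
probability `μ u`, and `Ĉ i j := ⨅ u, C u i j` where `C u` is the cost matrix
associated with `(P u, c u)`.  If the domain `D` is nonempty then: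
(1) `⨅ u, ∑ i, μ u i * c u i ≥ 0`;
(2) `Ĉ i j + Ĉ j i ≥ 0` for all `i ≠ j`;
(3) the slice `D_∘ = D ∩ {y_d = 0}` is compact.
If moreover `D` has nonempty interior, the inequalities in (1) and (2) are strict. -/
theorem controlled_nonempty_domain_necessary_conditions
    (n : ℕ) (𝒞 : Type*) [MetricSpace 𝒞] [CompactSpace 𝒞] [Nonempty 𝒞]
    (P : 𝒞 → Matrix (Fin (n + 2)) (Fin (n + 2)) ℝ)
    (c : 𝒞 → Fin (n + 2) → ℝ)
    (μ : 𝒞 → Fin (n + 2) → ℝ)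
    (C : 𝒞 → Fin (n + 2) → Fin (n + 2) → ℝ)
    (hPcont : ∀ i j, Continuous fun u => P u i j)
    (hccont : ∀ i, Continuous fun u => c u i)
    (hP0 : ∀ u i j, 0 ≤ P u i j)
    (hP1 : ∀ u i, ∑ j, P u i j = 1)
    (hirr : ∀ u i j, ∃ k : ℕ, 1 ≤ k ∧ 0 < (P u ^ k) i j)
    (hμpos : ∀ u i, 0 < μ u i)
    (hμsum : ∀ u, ∑ i, μ u i = 1)
    (hμinv : ∀ u j, ∑ i, μ u i * P u i j = μ u j)
    (hCdiag : ∀ u j, C u j j = 0)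
    (hCoff : ∀ u (j : Fin (n + 2)) (k : Fin (n + 1)),
      C u (j.succAbove k) j =
        (((1 - P u).submatrix j.succAbove j.succAbove)⁻¹ *ᵥ
          fun l => c u (j.succAbove l)) k)
    (D : Set (Fin (n + 2) → ℝ))
    (hD : D = {y | ∀ i, ∀ u : 𝒞, (∑ j, P u i j * y j) - c u i ≤ y i}) :
    (D.Nonempty →
      (0 ≤ ⨅ u : 𝒞, ∑ i, μ u i * c u i) ∧
      (∀ i j : Fin (n + 2), i ≠ j →
        0 ≤ (⨅ u : 𝒞, C u i j) + ⨅ u : 𝒞, C u j i) ∧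
      IsCompact (D ∩ {y | y (Fin.last (n + 1)) = 0})) ∧
    ((interior D).Nonempty →
      (0 < ⨅ u : 𝒞, ∑ i, μ u i * c u i) ∧
      (∀ i j : Fin (n + 2), i ≠ j →
        0 < (⨅ u : 𝒞, C u i j) + ⨅ u : 𝒞, C u j i)) := by
  subst hD
  have hP u : (P u).IsIrreducible := (isIrreducible_iff_exists_pow_pos (hP0 u)).2 (hirr u)
  have hC u j : IsHittingCost (P u) (c u) (fun i => C u i j) j :=
    isHittingCost_of_eq_inv_mulVec (hP u) (hP1 u) (hCdiag u j) (hCoff u j)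
  have hdiag := exists_lt_one_forall_diag_le (fun i => hPcont i i) hP hP1
  obtain ⟨hnonempty, hinterior⟩ := controlled_nonempty_domain_necessary_conditions_general hP hP1
    (fun u => ⟨fun i => (hμpos u i).le, hμsum u⟩) (fun u => funext (hμinv u)) hC (Fin.last (n + 1))
  exact ⟨hnonempty, fun hD => ⟨(hinterior hD).1 hdiag, (hinterior hD).2⟩⟩
end

section
/- In the uncontrolled setting with an irreducible stochastic matrix P and invariant probability μ, assume ∑_{i=1}^d μ_i c̄_i ≥ 0. Then for every 1 ≤ j ≤ d, the point z^j := −C_{·,j} ∈ ℝ^d satisfies (Q z^j + c̄)_i = 0 for all i ≠ j and (Q z^j + c̄)_j = (∑_{i=1}^d μ_i c̄_i)/μ_j ≥ 0; in particular z^j ∈ D. -/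
open Matrix

/-!
Pairing with the invariant vector `μ` annihilates the range of `Q = 1 - P`. Hence if `Q x` vanishes
off `j`, then it vanishes at `j` as well. In that case `|x| ≤ P |x|`, and pairing with `μ` again
forces `P |x| = |x|`; if moreover `x j = 0`, irreducibility propagates this zero everywhere. So the
matrix `Q` with row and column `j` deleted is invertible, and by construction `Q zʲ + c̄` vanishes
off `j`. Pairing it with `μ` then reads off its value at `j`.
-/

section FixedVectors

variable {ι R : Type*} [Fintype ι] [DecidableEq ι]

lemma pow_mulVec_eq_self [Semiring R] {P : Matrix ι ι R} {x : ι → R} (hx : P *ᵥ x = x) (k : ℕ) :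
    P ^ k *ᵥ x = x := by
  induction k with
  | zero => rw [pow_zero, one_mulVec]
  | succ k ih => rw [pow_succ, ← mulVec_mulVec, hx, ih]

lemma dotProduct_one_sub_mulVec_eq_zero [Ring R] {P : Matrix ι ι R} {μ : ι → R}
    (hμ : μ ᵥ* P = μ) (x : ι → R) : μ ⬝ᵥ (1 - P) *ᵥ x = 0 := by
  rw [dotProduct_mulVec, vecMul_sub, vecMul_one, hμ, sub_self, zero_dotProduct]

end FixedVectors

section Nonnegative

variable {ι κ R : Type*} [Fintype ι] [Ring R] [LinearOrder R] [IsStrictOrderedRing R]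

lemma eq_zero_of_dotProduct_eq_zero_of_pos {μ y : ι → R} (hμ : ∀ i, 0 < μ i) (hy : 0 ≤ y)
    (h : μ ⬝ᵥ y = 0) : y = 0 := by
  have hterm := (Fintype.sum_eq_zero_iff_of_nonneg fun i => mul_nonneg (hμ i).le (hy i)).mp h
  exact funext fun i => (mul_eq_zero.mp (congrFun hterm i)).resolve_left (hμ i).ne'

lemma abs_mulVec_le {A : Matrix κ ι R} (hA : ∀ i j, 0 ≤ A i j) (x : ι → R) :
    |A *ᵥ x| ≤ A *ᵥ |x| := fun i =>
  calc |∑ j, A i j * x j| ≤ ∑ j, |A i j * x j| := Finset.abs_sum_le_sum_abs _ _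
    _ = ∑ j, A i j * |x j| := by simp only [abs_mul, abs_of_nonneg (hA i _)]

variable {P : Matrix ι ι R} {μ x : ι → R} {j : ι}

lemma mulVec_eq_self_of_le_mulVec (hμpos : ∀ i, 0 < μ i) (hμ : μ ᵥ* P = μ) (hx : x ≤ P *ᵥ x) :
    P *ᵥ x = x := by
  refine sub_eq_zero.mp (eq_zero_of_dotProduct_eq_zero_of_pos hμpos (sub_nonneg.mpr hx) ?_)
  rw [dotProduct_sub, dotProduct_mulVec, hμ, sub_self]

lemma eq_zero_of_nonneg_of_mulVec_eq_self (hP : P.IsIrreducible) (hx0 : 0 ≤ x)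
    (hx : P *ᵥ x = x) (hxj : x j = 0) : x = 0 := by
  classical
  funext i
  obtain ⟨k, -, hk⟩ := (isIrreducible_iff_exists_pow_pos hP.nonneg).mp hP j i
  have hsum : ∑ l, (P ^ k) j l * x l = 0 := (congrFun (pow_mulVec_eq_self hx k) j).trans hxj
  have hterm := (Fintype.sum_eq_zero_iff_of_nonneg fun l =>
    mul_nonneg (pow_apply_nonneg hP.nonneg k j l) (hx0 l)).mp hsum
  exact (mul_eq_zero.mp (congrFun hterm i)).resolve_left hk.ne'

lemma eq_zero_of_mulVec_eq_self (hP : P.IsIrreducible) (hμpos : ∀ i, 0 < μ i)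
    (hμ : μ ᵥ* P = μ) (hx : P *ᵥ x = x) (hxj : x j = 0) : x = 0 := by
  have habs_le : |x| ≤ P *ᵥ |x| := by
    simpa only [hx] using abs_mulVec_le hP.nonneg x
  have habs_fixed : P *ᵥ |x| = |x| := mulVec_eq_self_of_le_mulVec hμpos hμ habs_le
  have habs_j : |x| j = 0 := by rw [Pi.abs_apply, hxj, abs_zero]
  have habs : |x| = 0 :=
    eq_zero_of_nonneg_of_mulVec_eq_self hP (fun i => abs_nonneg (x i)) habs_fixed habs_j
  exact funext fun i => abs_eq_zero.mp (congrFun habs i)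

end Nonnegative

-- `e` enumerates the indices other than `j`, so that `A.submatrix e e` is `A` with row and column
-- `j` deleted.
section Deletion

variable {ι κ R : Type*} {e : κ → ι} {j : ι}

lemma eq_single_of_comp_eq_zero [DecidableEq ι] [Zero R] (he : Set.range e = {j}ᶜ)
    {y : ι → R} (hy : y ∘ e = 0) : y = Pi.single j (y j) := by
  funext i
  obtain rfl | hij := eq_or_ne i j
  · rw [Pi.single_eq_same]
  · obtain ⟨k, rfl⟩ : i ∈ Set.range e := he ▸ hij
    rw [Pi.single_eq_of_ne hij]
    exact congrFun hy k

variable [Fintype ι]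

lemma submatrix_mulVec_comp_of_eq_zero_off_range [Fintype κ] [NonUnitalNonAssocSemiring R]
    {m l : Type*} (A : Matrix m ι R) (f : l → m) (he_inj : e.Injective) {x : ι → R}
    (hx : ∀ i ∉ Set.range e, x i = 0) : A.submatrix f e *ᵥ (x ∘ e) = (A *ᵥ x) ∘ f := by
  funext k
  refine Fintype.sum_of_injective e he_inj _ _ (fun i hi => ?_) fun _ => rfl
  rw [hx i hi, mul_zero]

variable [DecidableEq ι]

lemma eq_zero_of_one_sub_mulVec_comp_eq_zero [Ring R] [LinearOrder R] [IsStrictOrderedRing R]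
    {P : Matrix ι ι R} {μ x : ι → R} (hP : P.IsIrreducible) (hμpos : ∀ i, 0 < μ i)
    (hμ : μ ᵥ* P = μ) (he : Set.range e = {j}ᶜ) (hx : ((1 - P) *ᵥ x) ∘ e = 0)
    (hxj : x j = 0) : x = 0 := by
  have hsingle := eq_single_of_comp_eq_zero he hx
  have hpair := dotProduct_one_sub_mulVec_eq_zero hμ x
  rw [hsingle, dotProduct_single] at hpair
  have hQx : (1 - P) *ᵥ x = 0 := by
    rw [hsingle, (mul_eq_zero.mp hpair).resolve_left (hμpos j).ne', Pi.single_zero]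
  rw [sub_mulVec, one_mulVec, sub_eq_zero] at hQx
  exact eq_zero_of_mulVec_eq_self hP hμpos hμ hQx.symm hxj

variable [Field R] {P : Matrix ι ι R} {μ c x : ι → R}

lemma one_sub_mulVec_add_eq_single (hμj : μ j ≠ 0) (hμ : μ ᵥ* P = μ) (he : Set.range e = {j}ᶜ)
    (hx : ((1 - P) *ᵥ x + c) ∘ e = 0) :
    (1 - P) *ᵥ x + c = Pi.single j (μ ⬝ᵥ c / μ j) := by
  have hsingle := eq_single_of_comp_eq_zero he hx
  have hpair : μ ⬝ᵥ ((1 - P) *ᵥ x + c) = μ ⬝ᵥ c := by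
    rw [dotProduct_add, dotProduct_one_sub_mulVec_eq_zero hμ, zero_add]
  rw [hsingle, dotProduct_single] at hpair
  rw [hsingle, eq_div_of_mul_eq hμj ((mul_comm _ _).trans hpair)]

variable [LinearOrder R] [IsStrictOrderedRing R] [Fintype κ] [DecidableEq κ]

lemma isUnit_det_one_sub_submatrix (hP : P.IsIrreducible) (hμpos : ∀ i, 0 < μ i)
    (hμ : μ ᵥ* P = μ) (he_inj : e.Injective) (he : Set.range e = {j}ᶜ) :
    IsUnit ((1 - P).submatrix e e).det := by
  rw [isUnit_iff_ne_zero]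
  refine mt exists_mulVec_eq_zero_iff.mpr ?_
  rintro ⟨v, hv0, hv⟩
  obtain ⟨x, rfl, hx⟩ : ∃ x : ι → R, x ∘ e = v ∧ ∀ i ∉ Set.range e, x i = 0 :=
    ⟨Function.extend e v 0, Function.extend_comp he_inj v _, Function.extend_apply' v _⟩
  have hxj : x j = 0 := hx j (by simp [he])
  rw [submatrix_mulVec_comp_of_eq_zero_off_range _ _ he_inj hx] at hv
  exact hv0 (by rw [eq_zero_of_one_sub_mulVec_comp_eq_zero hP hμpos hμ he hv hxj, Pi.zero_comp])

lemma one_sub_mulVec_comp_of_comp_eq_inv_mulVec (hP : P.IsIrreducible) (hμpos : ∀ i, 0 < μ i)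
    (hμ : μ ᵥ* P = μ) (he_inj : e.Injective) (he : Set.range e = {j}ᶜ) (hxj : x j = 0)
    (hx : x ∘ e = ((1 - P).submatrix e e)⁻¹ *ᵥ (c ∘ e)) :
    ((1 - P) *ᵥ x) ∘ e = c ∘ e := by
  have hdet := isUnit_det_one_sub_submatrix hP hμpos hμ he_inj he
  have hoff : ∀ i ∉ Set.range e, x i = 0 := by simpa [he] using hxj
  rw [← submatrix_mulVec_comp_of_eq_zero_off_range _ _ he_inj hoff, hx, mulVec_mulVec,
    mul_nonsing_inv _ hdet, one_mulVec]

/-- Here `x` is the column `C_{·,j}` of the cost matrix, so that `-x` is `zʲ`. -/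
theorem extreme_candidate_points_belong_to_domain_general (hP : P.IsIrreducible)
    (hμpos : ∀ i, 0 < μ i) (hμ : μ ᵥ* P = μ) (he_inj : e.Injective) (he : Set.range e = {j}ᶜ)
    (hxj : x j = 0) (hx : x ∘ e = ((1 - P).submatrix e e)⁻¹ *ᵥ (c ∘ e)) (hmean : 0 ≤ μ ⬝ᵥ c) :
    (∀ i, i ≠ j → ((1 - P) *ᵥ (-x) + c : ι → R) i = 0) ∧
      ((1 - P) *ᵥ (-x) + c : ι → R) j = μ ⬝ᵥ c / μ j ∧
      0 ≤ μ ⬝ᵥ c / μ j ∧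
      0 ≤ (1 - P) *ᵥ (-x) + c := by
  have hvanish : ((1 - P) *ᵥ (-x) + c) ∘ e = 0 := by
    rw [mulVec_neg, Pi.add_comp, Pi.neg_comp,
      one_sub_mulVec_comp_of_comp_eq_inv_mulVec hP hμpos hμ he_inj he hxj hx, neg_add_cancel]
  have hnonneg : 0 ≤ μ ⬝ᵥ c / μ j := div_nonneg hmean (hμpos j).le
  rw [one_sub_mulVec_add_eq_single (hμpos j).ne' hμ he hvanish]
  exact ⟨fun i hij => Pi.single_eq_of_ne hij _, Pi.single_eq_same _ _, hnonneg,
    Pi.single_nonneg.mpr hnonneg⟩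

end Deletion

/-- Uncontrolled setting with an irreducible stochastic matrix `P`
(`d = n + 2`), invariant probability `μ`, cost vector `c̄` and cost matrix `C`;
assume `∑ i, μ i * c̄ i ≥ 0`.  Then for every `j`, the point `z^j := −C_{·,j}`
satisfies `(Q z^j + c̄)_i = 0` for all `i ≠ j` and
`(Q z^j + c̄)_j = (∑ i, μ i * c̄ i)/μ j ≥ 0`; in particular `z^j ∈ D`. -/
theorem extreme_candidate_points_belong_to_domain
    (n : ℕ)
    (P : Matrix (Fin (n + 2)) (Fin (n + 2)) ℝ)
    (c : Fin (n + 2) → ℝ) (μ : Fin (n + 2) → ℝ)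
    (hP0 : ∀ i j, 0 ≤ P i j)
    (hP1 : ∀ i, ∑ j, P i j = 1)
    (hirr : ∀ i j, ∃ k : ℕ, 1 ≤ k ∧ 0 < (P ^ k) i j)
    (hμpos : ∀ i, 0 < μ i)
    (hμsum : ∑ i, μ i = 1)
    (hμinv : ∀ j, ∑ i, μ i * P i j = μ j)
    (C : Fin (n + 2) → Fin (n + 2) → ℝ)
    (hCdiag : ∀ j, C j j = 0)
    (hCoff : ∀ (j : Fin (n + 2)) (k : Fin (n + 1)),
      C (j.succAbove k) j =
        (((1 - P).submatrix j.succAbove j.succAbove)⁻¹ *ᵥ fun l => c (j.succAbove l)) k)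
    (D : Set (Fin (n + 2) → ℝ))
    (hD : D = {x | ∀ i, (∑ j, P i j * x j) - c i ≤ x i})
    (hmean : 0 ≤ ∑ i, μ i * c i) :
    ∀ j : Fin (n + 2),
      (∀ i, i ≠ j → (-C i j - ∑ k, P i k * (-C k j)) + c i = 0) ∧
      (-C j j - ∑ k, P j k * (-C k j)) + c j = (∑ i, μ i * c i) / μ j ∧
      0 ≤ (∑ i, μ i * c i) / μ j ∧
      (fun i => -C i j) ∈ D := by
  intro j
  simpa [hD, sub_mulVec, mulVec, dotProduct, Pi.le_def, sub_add] using
    extreme_candidate_points_belong_to_domain_general (x := fun i => C i j) (c := c)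
      ((isIrreducible_iff_exists_pow_pos hP0).mpr hirr) hμpos (funext hμinv)
      j.succAbove_right_injective j.range_succAbove (hCdiag j) (funext (hCoff j)) hmean
end
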